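/- arXiv:2409.03335 — 5 statements merged into one kernel-verified Lean document; each statement's English description precedes it below -/
import Mathlib

section
/- Let x̃ = θ^S + σξ where ξ ~ N(0, I_p), σ > 0, S is uniformly distributed over the collection 𝕊̃ of all k-element subsets of [p] containing {1,…,k−1}, and θ^S(j) = (1/√k)·1{j ∈ S}. Let Σ be the (unconditional) covariance matrix of x̃. Then log det(Σ) ≤ p·log(σ²) + (p−k+1)·log(1 + 1/(k(p−k+1)σ²)). -/
open MeasureTheory ProbabilityTheory
open scoped ENNReal NNReal

noncomputable section

/-- The collection `𝕊̃` of all `k`-element subsets of `Fin p` containing the first `k-1`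
indices `{0, …, k-2}`. -/
def stildeF (p k : ℕ) : Finset (Finset (Fin p)) :=
  ((Finset.univ : Finset (Fin p)).powersetCard k).filter
    (fun T => ∀ i : Fin p, (i : ℕ) < k - 1 → i ∈ T)

/-- The vector `θ^T` with `θ^T(j) = 1/√k` for `j ∈ T` and `0` otherwise. -/
def thetaVec (p k : ℕ) (T : Finset (Fin p)) : Fin p → ℝ :=
  fun j => if j ∈ T then (Real.sqrt k)⁻¹ else 0

/-- The law of `x̃ = θ^S + σξ`, where `ξ ~ N(0, I_p)` and `S` is uniform over `𝕊̃`. -/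
def xtildeLaw (p k : ℕ) (σ : ℝ) : Measure (Fin p → ℝ) :=
  (((stildeF p k).card : ℝ≥0∞))⁻¹ •
    ∑ T ∈ stildeF p k,
      Measure.pi fun j : Fin p => gaussianReal (thetaVec p k T j) (Real.toNNReal (σ ^ 2))

/-- The mean of `x̃`. -/
def xtildeMean (p k : ℕ) (σ : ℝ) : Fin p → ℝ :=
  fun a => ∫ x, x a ∂(xtildeLaw p k σ)

/-- The covariance matrix `Σ` of `x̃`. -/
def xtildeCov (p k : ℕ) (σ : ℝ) : Matrix (Fin p) (Fin p) ℝ :=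
  Matrix.of fun a b => ∫ x,
    (x a - xtildeMean p k σ a) * (x b - xtildeMean p k σ b) ∂(xtildeLaw p k σ)

def gpi (p : ℕ) (θ : Fin p → ℝ) (v : ℝ≥0) : Measure (Fin p → ℝ) :=
  Measure.pi fun j : Fin p => gaussianReal (θ j) v

instance gpi_prob (p : ℕ) (θ : Fin p → ℝ) (v : ℝ≥0) : IsProbabilityMeasure (gpi p θ v) := by
  unfold gpi; infer_instance

lemma gpi_mp (p : ℕ) (θ : Fin p → ℝ) (v : ℝ≥0) (a : Fin p) :
    MeasurePreserving (fun x : Fin p → ℝ => x a) (gpi p θ v) (gaussianReal (θ a) v) :=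
  measurePreserving_eval _ a

lemma gpi_memLp (p : ℕ) (θ : Fin p → ℝ) (v : ℝ≥0) (a : Fin p) :
    MemLp (fun x : Fin p → ℝ => x a) 2 (gpi p θ v) :=
  (memLp_id_gaussianReal' (μ := θ a) (v := v) 2 (by simp)).comp_measurePreserving (gpi_mp p θ v a)

lemma gpi_mean (p : ℕ) (θ : Fin p → ℝ) (v : ℝ≥0) (a : Fin p) :
    ∫ x, x a ∂(gpi p θ v) = θ a := by
  have h := (gpi_mp p θ v a)
  rw [← integral_id_gaussianReal (μ := θ a) (v := v), ← h.map_eq,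
    integral_map h.measurable.aemeasurable (by fun_prop)]

lemma gpi_intble (p : ℕ) (θ : Fin p → ℝ) (v : ℝ≥0) (a : Fin p) :
    Integrable (fun x : Fin p → ℝ => x a) (gpi p θ v) :=
  (gpi_memLp p θ v a).integrable (by simp)

lemma gpi_intble2 (p : ℕ) (θ : Fin p → ℝ) (v : ℝ≥0) (a b : Fin p) (c d : ℝ) :
    Integrable (fun x : Fin p → ℝ => (x a - c) * (x b - d)) (gpi p θ v) :=
  ((gpi_memLp p θ v a).sub (memLp_const c)).integrable_mul
    ((gpi_memLp p θ v b).sub (memLp_const d))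

lemma gpi_cov (p : ℕ) (θ : Fin p → ℝ) (v : ℝ≥0) (a b : Fin p) :
    ∫ x, (x a - θ a) * (x b - θ b) ∂(gpi p θ v) = if a = b then (v : ℝ) else 0 := by
  split_ifs with hab
  · subst hab
    have h := (gpi_mp p θ v a)
    have h2 := variance_fun_id_gaussianReal (μ := θ a) (v := v)
    rw [variance_eq_integral measurable_id'.aemeasurable, integral_id_gaussianReal, ← h.map_eq,
      integral_map h.measurable.aemeasurable (by fun_prop)] at h2
    rw [← h2]
    simp only [sq]
  · have hi : iIndepFun (fun (i : Fin p) (x : Fin p → ℝ) => x i - θ i) (gpi p θ v) :=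
      iIndepFun_pi (X := fun i y => y - θ i) (fun i => by fun_prop)
    rw [(hi.indepFun hab).integral_fun_mul_eq_mul_integral
        (Measurable.aestronglyMeasurable (by fun_prop))
        (Measurable.aestronglyMeasurable (by fun_prop)),
      integral_sub (gpi_intble p θ v a) (integrable_const _), gpi_mean]
    simp

lemma gpi_cov2 (p : ℕ) (θ : Fin p → ℝ) (v : ℝ≥0) (a b : Fin p) (c d : ℝ) :
    ∫ x, (x a - c) * (x b - d) ∂(gpi p θ v)
      = (θ a - c) * (θ b - d) + if a = b then (v : ℝ) else 0 := by
  rw [← gpi_cov p θ v a b]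
  have e : ∀ x : Fin p → ℝ, (x a - c) * (x b - d) =
      (x a - θ a) * (x b - θ b) + ((θ b - d) * (x a - c) + (θ a - c) * (x b - θ b)) := by
    intro x; ring
  have ia : Integrable (fun x : Fin p → ℝ => x a - c) (gpi p θ v) :=
    (gpi_intble p θ v a).sub (integrable_const c)
  have ib : Integrable (fun x : Fin p → ℝ => x b - θ b) (gpi p θ v) :=
    (gpi_intble p θ v b).sub (integrable_const (θ b))
  have iab : Integrable (fun x : Fin p → ℝ => (θ b - d) * (x a - c) + (θ a - c) * (x b - θ b))
      (gpi p θ v) := (ia.const_mul _).add (ib.const_mul _)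
  rw [integral_congr_ae (ae_of_all _ e), integral_add (gpi_intble2 _ _ _ _ _ _ _) iab,
    integral_add (ia.const_mul _) (ib.const_mul _), integral_const_mul, integral_const_mul,
    integral_sub (gpi_intble p θ v a) (integrable_const _),
    integral_sub (gpi_intble p θ v b) (integrable_const _), gpi_mean, gpi_mean]
  simp; ring

def Aset (p k : ℕ) : Finset (Fin p) := Finset.univ.filter (fun i => (i : ℕ) < k - 1)
def Bset (p k : ℕ) : Finset (Fin p) := Finset.univ.filter (fun i => ¬ (i : ℕ) < k - 1)

lemma Aset_card (p k : ℕ) (hk : 1 ≤ k) (hkp : k ≤ p) : (Aset p k).card = k - 1 := by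
  unfold Aset
  rw [Fin.card_filter_val_lt]; omega

lemma Bset_card (p k : ℕ) (hk : 1 ≤ k) (hkp : k ≤ p) : (Bset p k).card = p - k + 1 := by
  have h := Finset.card_filter_add_card_filter_not (s := (Finset.univ : Finset (Fin p)))
    (fun i => (i : ℕ) < k - 1)
  have h1 := Aset_card p k hk hkp
  unfold Aset at h1
  unfold Bset
  simp only [Finset.card_univ, Fintype.card_fin] at h
  omega

lemma stildeF_eq (p k : ℕ) (hk : 1 ≤ k) (hkp : k ≤ p) :
    stildeF p k = (Bset p k).image (fun j => insert j (Aset p k)) := by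
  have hA := Aset_card p k hk hkp
  ext T
  simp only [stildeF, Finset.mem_filter, Finset.mem_powersetCard, Finset.mem_image]
  constructor
  · rintro ⟨⟨-, hc⟩, h⟩
    have hsub : Aset p k ⊆ T := fun i hi => h i (by simpa [Aset] using hi)
    have h1 : (T \ Aset p k).card = 1 := by
      rw [Finset.card_sdiff_of_subset hsub]; omega
    obtain ⟨j, hj⟩ := Finset.card_eq_one.1 h1
    have hjm : j ∈ T \ Aset p k := by rw [hj]; simp
    refine ⟨j, ?_, ?_⟩
    · simp only [Finset.mem_sdiff, Aset, Finset.mem_filter, Finset.mem_univ, true_and] at hjm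
      simpa [Bset] using hjm.2
    · rw [Finset.insert_eq, ← hj, Finset.sdiff_union_of_subset hsub]
  · rintro ⟨j, hj, rfl⟩
    have hj' : j ∉ Aset p k := by simpa [Aset, Bset] using hj
    refine ⟨⟨Finset.subset_univ _, ?_⟩, ?_⟩
    · rw [Finset.card_insert_of_notMem hj']; omega
    · intro i hi
      exact Finset.mem_insert_of_mem (by simpa [Aset] using hi)

lemma ins_inj (p k : ℕ) :
    Set.InjOn (fun j => insert j (Aset p k)) (Bset p k : Set (Fin p)) := by
  intro a ha b hb hab
  have ha' : a ∉ Aset p k := by simpa [Aset, Bset] using ha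
  have : a ∈ insert b (Aset p k) := by
    have h : insert a (Aset p k) = insert b (Aset p k) := hab
    rw [← h]; simp
  simpa [ha'] using this

lemma law_integral (p k : ℕ) (σ : ℝ) (hk : 1 ≤ k) (hkp : k ≤ p) (f : (Fin p → ℝ) → ℝ)
    (hf : ∀ T, Integrable f (gpi p (thetaVec p k T) (Real.toNNReal (σ ^ 2)))) :
    ∫ x, f x ∂(xtildeLaw p k σ) = ((p - k + 1 : ℕ) : ℝ)⁻¹ * ∑ j ∈ Bset p k,
      ∫ x, f x ∂(gpi p (thetaVec p k (insert j (Aset p k))) (Real.toNNReal (σ ^ 2))) := by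
  unfold xtildeLaw
  unfold gpi at hf
  rw [integral_smul_measure, integral_finsetSum_measure (fun T _ => hf T), stildeF_eq p k hk hkp,
    Finset.card_image_of_injOn (ins_inj p k), Finset.sum_image (ins_inj p k), Bset_card p k hk hkp,
    ENNReal.toReal_inv, ENNReal.toReal_natCast, smul_eq_mul]
  rfl

lemma theta_ins (p k : ℕ) (j a : Fin p) :
    thetaVec p k (insert j (Aset p k)) a =
      (Real.sqrt k)⁻¹ * if (a : ℕ) < k - 1 then 1 else if a = j then 1 else 0 := by
  simp only [thetaVec, Aset, Finset.mem_insert, Finset.mem_filter, Finset.mem_univ, true_and]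
  split_ifs <;> simp_all

lemma mean_eq (p k : ℕ) (σ : ℝ) (hk : 1 ≤ k) (hkp : k ≤ p) (a : Fin p) :
    xtildeMean p k σ a =
      (Real.sqrt k)⁻¹ * if (a : ℕ) < k - 1 then 1 else ((p - k + 1 : ℕ) : ℝ)⁻¹ := by
  unfold xtildeMean
  rw [law_integral p k σ hk hkp _ (fun T => gpi_intble _ _ _ _)]
  simp only [gpi_mean, theta_ins]
  have hm : ((p - k + 1 : ℕ) : ℝ) ≠ 0 := by positivity
  by_cases h : (a : ℕ) < k - 1
  · simp only [h, if_true, Finset.sum_const, Bset_card p k hk hkp, nsmul_eq_mul]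
    field_simp
  · have hB : a ∈ Bset p k := by simpa [Bset] using h
    simp only [h, if_false, ← Finset.mul_sum, Finset.sum_ite_eq, hB, if_true]
    ring

lemma cov_eq (p k : ℕ) (σ : ℝ) (hk : 1 ≤ k) (hkp : k ≤ p) (a b : Fin p) :
    xtildeCov p k σ a b =
      (if a = b then σ ^ 2 + (if (a : ℕ) < k - 1 then 0 else ((k : ℝ) * (p - k + 1 : ℕ))⁻¹) else 0)
      - (if (a : ℕ) < k - 1 then 0 else (Real.sqrt k)⁻¹ * ((p - k + 1 : ℕ) : ℝ)⁻¹)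
       * (if (b : ℕ) < k - 1 then 0 else (Real.sqrt k)⁻¹ * ((p - k + 1 : ℕ) : ℝ)⁻¹) := by
  unfold xtildeCov
  rw [Matrix.of_apply, law_integral p k σ hk hkp _ (fun T => gpi_intble2 _ _ _ _ _ _ _)]
  have hm : ((p - k + 1 : ℕ) : ℝ) ≠ 0 := by positivity
  have hv : ((Real.toNNReal (σ ^ 2) : ℝ≥0) : ℝ) = σ ^ 2 := Real.coe_toNNReal _ (sq_nonneg σ)
  have hs : (Real.sqrt k)⁻¹ * (Real.sqrt k)⁻¹ = (k : ℝ)⁻¹ := by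
    rw [← mul_inv, Real.mul_self_sqrt (by positivity)]
  simp only [gpi_cov2, theta_ins, mean_eq p k σ hk hkp, hv]
  rw [Finset.sum_add_distrib, Finset.sum_const, Bset_card p k hk hkp, nsmul_eq_mul]
  generalize hM : ((p - k + 1 : ℕ) : ℝ) = m at *
  by_cases ha : (a : ℕ) < k - 1
  · simp only [ha, if_true]
    simp [hm]
  by_cases hb : (b : ℕ) < k - 1
  · have hab : a ≠ b := by rintro rfl; exact ha hb
    simp [hb, hab]
  have hB : a ∈ Bset p k := by simpa [Bset] using ha
  have hB' : b ∈ Bset p k := by simpa [Bset] using hb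
  simp only [ha, hb, if_false]
  have key : ∑ j ∈ Bset p k, ((Real.sqrt k)⁻¹ * (if a = j then (1:ℝ) else 0) - (Real.sqrt k)⁻¹ * m⁻¹) *
      ((Real.sqrt k)⁻¹ * (if b = j then (1:ℝ) else 0) - (Real.sqrt k)⁻¹ * m⁻¹)
      = (k : ℝ)⁻¹ * ((if a = b then 1 else 0) - m⁻¹) := by
    have e : ∀ j : Fin p, ((Real.sqrt k)⁻¹ * (if a = j then (1:ℝ) else 0) - (Real.sqrt k)⁻¹ * m⁻¹) *
      ((Real.sqrt k)⁻¹ * (if b = j then (1:ℝ) else 0) - (Real.sqrt k)⁻¹ * m⁻¹)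
      = (k : ℝ)⁻¹ * ((if a = j then (if b = j then 1 else 0) else 0)
        - m⁻¹ * (if a = j then 1 else 0) - m⁻¹ * (if b = j then 1 else 0) + m⁻¹ * m⁻¹) := by
      intro j
      rw [← hs]
      split_ifs <;> ring
    simp only [e, ← Finset.mul_sum, Finset.sum_add_distrib, Finset.sum_sub_distrib,
      Finset.sum_ite_eq, hB, hB', if_true, Finset.sum_const, Bset_card p k hk hkp, nsmul_eq_mul, hM]
    rw [mul_inv_cancel₀ hm]
    simp only [eq_comm (a := b)]
    ring
  rw [key]
  have e2 : (Real.sqrt k)⁻¹ * m⁻¹ * ((Real.sqrt k)⁻¹ * m⁻¹) = (k : ℝ)⁻¹ * m⁻¹ * m⁻¹ := by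
    rw [← hs]; ring
  rw [e2, mul_inv]
  split_ifs <;> field_simp <;> ring

lemma det_rank1 {p : ℕ} (d w : Fin p → ℝ) (hd : ∀ i, d i ≠ 0) (M : Matrix (Fin p) (Fin p) ℝ)
    (hM : ∀ a b, M a b = (if a = b then d a else 0) - w a * w b) :
    M.det = (∏ i, d i) * (1 - ∑ i, w i ^ 2 / d i) := by
  have e : M = Matrix.diagonal d * (1 + Matrix.replicateCol Unit (fun i => - w i / d i) *
      Matrix.replicateRow Unit w) := by
    ext a b
    rw [Matrix.diagonal_mul, hM, Matrix.add_apply, Matrix.mul_apply, Matrix.one_apply]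
    have := hd a
    simp only [Matrix.replicateCol_apply, Matrix.replicateRow_apply, Finset.univ_unique,
      Finset.sum_const, Finset.card_singleton, one_smul]
    split_ifs <;> field_simp <;> ring
  rw [e, Matrix.det_mul, Matrix.det_diagonal, Matrix.det_one_add_replicateCol_mul_replicateRow,
    sub_eq_add_neg, ← Finset.sum_neg_distrib]
  congr 2
  simp only [dotProduct]
  exact Finset.sum_congr rfl fun i _ => by ring

/-- Lemma 9: `log det Σ ≤ p log σ² + (p-k+1) log(1 + 1/(k(p-k+1)σ²))`. -/
theorem stmt8 (p k : ℕ) (σ : ℝ) (hσ : 0 < σ) (hk : 1 ≤ k) (hkp : k ≤ p) :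
    Real.log (xtildeCov p k σ).det
      ≤ (p : ℝ) * Real.log (σ ^ 2)
        + ((p : ℝ) - (k : ℝ) + 1) *
          Real.log (1 + 1 / ((k : ℝ) * ((p : ℝ) - (k : ℝ) + 1) * σ ^ 2)) := by
  have hkR : (0 : ℝ) < k := by exact_mod_cast hk
  have hmm : ((p : ℝ) - (k : ℝ) + 1) = ((p - k + 1 : ℕ) : ℝ) := by
    push_cast [Nat.cast_sub hkp]; ring
  rw [hmm, det_rank1 (fun a : Fin p => σ ^ 2 +
      (if (a : ℕ) < k - 1 then 0 else ((k : ℝ) * (p - k + 1 : ℕ))⁻¹))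
    (fun a : Fin p => if (a : ℕ) < k - 1 then 0 else (Real.sqrt k)⁻¹ * ((p - k + 1 : ℕ) : ℝ)⁻¹)
    (fun a => by positivity) _ (cov_eq p k σ hk hkp)]
  have hm0 : (0 : ℝ) < ((p - k + 1 : ℕ) : ℝ) := by positivity
  have hcB := Bset_card p k hk hkp
  have hprod : (∏ a : Fin p, (σ ^ 2 +
      (if (a : ℕ) < k - 1 then 0 else ((k : ℝ) * (p - k + 1 : ℕ))⁻¹)))
      = (σ ^ 2) ^ p * (1 + 1 / ((k : ℝ) * (p - k + 1 : ℕ) * σ ^ 2)) ^ (p - k + 1) := by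
    have e : ∀ a : Fin p, (σ ^ 2 + (if (a : ℕ) < k - 1 then 0 else ((k : ℝ) * (p - k + 1 : ℕ))⁻¹))
       = σ ^ 2 * (if ¬ (a : ℕ) < k - 1 then (1 + 1 / ((k : ℝ) * (p - k + 1 : ℕ) * σ ^ 2)) else 1) := by
      intro a
      split_ifs
      · ring
      · field_simp
    simp only [e, Finset.prod_mul_distrib]
    rw [← Finset.prod_filter, Finset.prod_const, Finset.prod_const]
    congr 2
    simp
  have hsum : (∑ a : Fin p,
      (if (a : ℕ) < k - 1 then 0 else (Real.sqrt k)⁻¹ * ((p - k + 1 : ℕ) : ℝ)⁻¹) ^ 2 / (σ ^ 2 +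
      (if (a : ℕ) < k - 1 then 0 else ((k : ℝ) * (p - k + 1 : ℕ))⁻¹)))
      = 1 / ((k : ℝ) * (p - k + 1 : ℕ) * σ ^ 2 + 1) := by
    have e : ∀ a : Fin p,
      (if (a : ℕ) < k - 1 then 0 else (Real.sqrt k)⁻¹ * ((p - k + 1 : ℕ) : ℝ)⁻¹) ^ 2 / (σ ^ 2 +
      (if (a : ℕ) < k - 1 then 0 else ((k : ℝ) * (p - k + 1 : ℕ))⁻¹))
      = if ¬ (a : ℕ) < k - 1 then
        ((p - k + 1 : ℕ) : ℝ)⁻¹ * (1 / ((k : ℝ) * (p - k + 1 : ℕ) * σ ^ 2 + 1)) else 0 := by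
      intro a
      split_ifs
      · simp
      · rw [mul_pow, inv_pow, Real.sq_sqrt hkR.le]
        field_simp
    simp only [e]
    rw [← Finset.sum_filter, Finset.sum_const, nsmul_eq_mul]
    unfold Bset at hcB
    rw [hcB, mul_inv_cancel_left₀ hm0.ne']
  rw [hprod, hsum]
  have hpos : 0 < (k : ℝ) * (p - k + 1 : ℕ) * σ ^ 2 := by positivity
  generalize (k : ℝ) * (p - k + 1 : ℕ) * σ ^ 2 = t at hpos ⊢
  have h1 : 0 < 1 - 1 / (t + 1) := by
    rw [sub_pos, div_lt_one (by positivity)]; linarith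
  have h2 : 1 - 1 / (t + 1) ≤ 1 := by
    have : 0 < 1 / (t + 1) := by positivity
    linarith
  rw [Real.log_mul (by positivity) h1.ne', Real.log_mul (by positivity) (by positivity),
    Real.log_pow (n := p - k + 1), Real.log_pow (n := p)]
  have := Real.log_nonpos h1.le h2
  linarith
end
end

section
/- Let x be a single sample from the symmetric sparse Gaussian mixture model with mean vector μ^S, where S is uniformly distributed over the collection 𝕊̃ of k-element subsets of [p] containing {1,…,k−1}, and let I(x; S) be their mutual information. In the asymptotic setting p → ∞ with k → ∞ and k/p → 0, if λ < 1, then for p and k sufficiently large with k/p sufficiently small, I(x; S) ≤ (1/2)·(λ²/k)·(1+o(1)). -/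
open MeasureTheory ProbabilityTheory Filter
open scoped ENNReal NNReal

noncomputable section

/-- Kullback-Leibler divergence `KL(μ ‖ ν) = ∫ log (dμ/dν) dμ` (real-valued version). -/
def klDivR {α : Type*} [MeasurableSpace α] (μ ν : Measure α) : ℝ :=
  ∫ x, Real.log ((μ.rnDeriv ν x).toReal) ∂μ

/-- Mutual information `I(x; S)` between a sample `x` with conditional law `κ S` and a
latent variable `S` uniformly distributed on the finite index type: the average KL
divergence between the conditional laws and the (uniform) mixture marginal. -/
def mutualInfoUnif {ι α : Type*} [Fintype ι] [MeasurableSpace α] (κ : ι → Measure α) : ℝ :=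
  (Fintype.card ι : ℝ)⁻¹ *
    ∑ s : ι, klDivR (κ s) ((Fintype.card ι : ℝ≥0∞)⁻¹ • ∑ t : ι, κ t)

/-- Product of independent one-dimensional Gaussians `N(m j, 1)`: the law of `N(m, I_p)`. -/
def gaussPi {p : ℕ} (m : Fin p → ℝ) : Measure (Fin p → ℝ) :=
  Measure.pi fun j => gaussianReal (m j) 1

/-- The law of one unlabeled sample `x`: equal mixture of `N(μ, I_p)` and `N(-μ, I_p)`. -/
def unlabeledLaw {p : ℕ} (m : Fin p → ℝ) : Measure (Fin p → ℝ) :=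
  (2 : ℝ≥0∞)⁻¹ • gaussPi m + (2 : ℝ≥0∞)⁻¹ • gaussPi (fun j => -m j)

/-- The `k`-sparse mean vector with support `S` and nonzero entries `√(λ/k)`. -/
def muVec (p k : ℕ) (lam : ℝ) (S : Finset (Fin p)) : Fin p → ℝ :=
  fun j => if j ∈ S then Real.sqrt (lam / k) else 0

lemma hasDerivAt_tanh' (x : ℝ) : HasDerivAt Real.tanh (1 - Real.tanh x ^ 2) x := by
  have h : Real.tanh = fun x => Real.sinh x / Real.cosh x := by
    ext y; exact Real.tanh_eq_sinh_div_cosh y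
  have hc := (Real.cosh_pos x).ne'
  have h1 := (Real.hasDerivAt_sinh x).div (Real.hasDerivAt_cosh x) hc
  have h2 : (Real.cosh x * Real.cosh x - Real.sinh x * Real.sinh x) / Real.cosh x ^ 2
      = 1 - Real.tanh x ^ 2 := by
    rw [Real.tanh_eq_sinh_div_cosh]
    field_simp
  rw [h2] at h1
  rw [h] at h1 ⊢
  exact h1

lemma hasDerivAt_logcosh (x : ℝ) :
    HasDerivAt (fun x => Real.log (Real.cosh x)) (Real.tanh x) x := by
  convert (Real.hasDerivAt_cosh x).log (Real.cosh_pos x).ne' using 1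
  exact Real.tanh_eq_sinh_div_cosh x

lemma nonneg_of_deriv {F F' : ℝ → ℝ} (h : ∀ x, HasDerivAt F (F' x) x) (h0 : F 0 = 0)
    (hF : ∀ x, 0 ≤ x → 0 ≤ F' x) {x : ℝ} (hx : 0 ≤ x) : 0 ≤ F x := by
  have : MonotoneOn F (Set.Ici 0) := by
    apply monotoneOn_of_deriv_nonneg (convex_Ici 0)
    · exact fun y _ => (h y).continuousAt.continuousWithinAt
    · exact fun y _ => (h y).differentiableAt.differentiableWithinAt
    · intro y hy
      rw [(h y).deriv]
      simp at hy
      exact hF y hy.le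
  have := this (Set.mem_Ici.2 le_rfl) (Set.mem_Ici.2 hx) hx
  rwa [h0] at this

lemma shift_deriv {F : ℝ → ℝ} {F' : ℝ} (t x : ℝ) (h : HasDerivAt F F' (t + x)) :
    HasDerivAt (fun x => F (t + x)) F' x := by
  simpa using h.comp_const_add t x

lemma tanh_lip (t : ℝ) {x : ℝ} (hx : 0 ≤ x) : 0 ≤ x - (Real.tanh (t + x) - Real.tanh t) := by
  apply nonneg_of_deriv (F := fun x => x - (Real.tanh (t + x) - Real.tanh t))
    (F' := fun x => 1 - (1 - Real.tanh (t + x) ^ 2)) _ (by simp) _ hx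
  · intro y
    exact (hasDerivAt_id y).sub ((shift_deriv t y (hasDerivAt_tanh' _)).sub_const _)
  · intro y _; nlinarith [sq_nonneg (Real.tanh (t + y))]

lemma tanh_mono' (t : ℝ) {x : ℝ} (hx : 0 ≤ x) : 0 ≤ Real.tanh (t + x) - Real.tanh t := by
  apply nonneg_of_deriv (F := fun x => (Real.tanh (t + x) - Real.tanh t))
    (F' := fun x => (1 - Real.tanh (t + x) ^ 2)) _ (by simp) _ hx
  · intro y
    exact ((shift_deriv t y (hasDerivAt_tanh' _)).sub_const _)
  · intro y _; nlinarith [Real.tanh_sq_lt_one (t + y)]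

lemma tanh_taylor (t : ℝ) {x : ℝ} (hx : 0 ≤ x) :
    0 ≤ x * (1 - Real.tanh t ^ 2) + x ^ 2 - (Real.tanh (t + x) - Real.tanh t) := by
  apply nonneg_of_deriv
    (F := fun x => x * (1 - Real.tanh t ^ 2) + x ^ 2 - (Real.tanh (t + x) - Real.tanh t))
    (F' := fun x => 1 * (1 - Real.tanh t ^ 2) + 2 * x - (1 - Real.tanh (t + x) ^ 2)) _ (by simp) _ hx
  · intro y
    have h2 : HasDerivAt (fun x : ℝ => x ^ 2) (2 * y) y := by simpa using hasDerivAt_pow 2 y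
    exact (((hasDerivAt_id y).mul_const _).add h2).sub
      ((shift_deriv t y (hasDerivAt_tanh' _)).sub_const _)
  · intro y hy
    have h1 := tanh_lip t hy
    have h2 := tanh_mono' t hy
    have h3 := Real.neg_one_lt_tanh t
    have h4 := Real.neg_one_lt_tanh (t + y)
    have : 0 ≤ (Real.tanh (t + y) - Real.tanh t) * (Real.tanh (t + y) + Real.tanh t + 2) :=
      mul_nonneg h2 (by linarith)
    nlinarith

lemma logcosh_taylor_pos (t : ℝ) {x : ℝ} (hx : 0 ≤ x) :
    Real.log (Real.cosh (t + x)) ≤ Real.log (Real.cosh t) + x * Real.tanh t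
      + x ^ 2 / 2 * (1 - Real.tanh t ^ 2) + x ^ 3 / 3 := by
  have := nonneg_of_deriv
    (F := fun x => x * Real.tanh t
      + x ^ 2 / 2 * (1 - Real.tanh t ^ 2) + x ^ 3 / 3
       - (Real.log (Real.cosh (t + x)) - Real.log (Real.cosh t)))
    (F' := fun x => 1 * Real.tanh t + (2 * x / 2) * (1 - Real.tanh t ^ 2) + 3 * x ^ 2 / 3
      - Real.tanh (t + x)) ?_ (by simp) ?_ hx
  · linarith
  · intro y
    have h2 : HasDerivAt (fun x : ℝ => x ^ 2) (2 * y) y := by simpa using hasDerivAt_pow 2 y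
    have h3 : HasDerivAt (fun x : ℝ => x ^ 3) (3 * y ^ 2) y := by simpa using hasDerivAt_pow 3 y
    exact ((((hasDerivAt_id y).mul_const _).add ((h2.div_const 2).mul_const _)).add
      (h3.div_const 3)).sub
      ((shift_deriv t y (hasDerivAt_logcosh _)).sub_const _)
  · intro y hy
    have h1 := tanh_taylor t hy
    nlinarith

lemma logcosh_taylor (t x : ℝ) :
    Real.log (Real.cosh (t + x)) ≤ Real.log (Real.cosh t) + x * Real.tanh t
      + x ^ 2 / 2 * (1 - Real.tanh t ^ 2) + |x| ^ 3 / 3 := by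
  rcases le_total 0 x with h | h
  · rw [abs_of_nonneg h]; exact logcosh_taylor_pos t h
  · have := logcosh_taylor_pos (-t) (x := -x) (by linarith)
    rw [abs_of_nonpos h]
    rw [← neg_add, Real.cosh_neg, Real.cosh_neg, Real.tanh_neg] at this
    nlinarith

lemma one_sub_tanh_ge (x : ℝ) :
    Real.tanh x ≤ 1 - (2 * Real.exp (-x) - (1 + Real.exp (-(2 * x))) / 2) := by
  have hp := Real.exp_pos (-x)
  have h2 : Real.exp (-(2 * x)) = Real.exp (-x) ^ 2 := by rw [← Real.exp_nat_mul]; congr 1; push_cast; ring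
  have hi : Real.exp x = (Real.exp (-x))⁻¹ := by rw [Real.exp_neg, inv_inv]
  rw [Real.tanh_eq_sinh_div_cosh, Real.sinh_eq, Real.cosh_eq, h2, hi]
  set e := Real.exp (-x)
  have : (e⁻¹ - e) / 2 / ((e⁻¹ + e) / 2) = (1 - e ^ 2) / (1 + e ^ 2) := by field_simp
  rw [this, div_le_iff₀ (by positivity)]
  nlinarith [sq_nonneg ((e - 1) ^ 2)]

lemma logcosh_nonneg (x : ℝ) : 0 ≤ Real.log (Real.cosh x) := Real.log_nonneg (Real.one_le_cosh x)

lemma cosh_le_exp_abs' (x : ℝ) : Real.cosh x ≤ Real.exp |x| := by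
  rw [← Real.cosh_abs, Real.cosh_eq]
  have : Real.exp (-|x|) ≤ Real.exp |x| := Real.exp_le_exp.2 (by linarith [abs_nonneg x])
  linarith

lemma logcosh_le_abs (x : ℝ) : Real.log (Real.cosh x) ≤ |x| := by
  rw [← Real.log_exp |x|]
  exact Real.log_le_log (Real.cosh_pos x) (cosh_le_exp_abs' x)

lemma measurable_tanh' : Measurable Real.tanh := by
  have : Continuous Real.tanh :=
    continuous_iff_continuousAt.2 fun x => (hasDerivAt_tanh' x).continuousAt
  exact this.measurable

lemma nishimori (v : ℝ≥0) (hv : v ≠ 0) :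
    ∫ x, (Real.tanh x - Real.tanh x ^ 2) ∂(gaussianReal v v) = 0 := by
  rw [integral_gaussianReal_eq_integral_smul hv]
  set F : ℝ → ℝ := fun x => gaussianPDFReal v v x • (Real.tanh x - Real.tanh x ^ 2)
  have hodd : ∀ x, F (-x) = - F x := by
    intro x
    simp only [F, gaussianPDFReal, smul_eq_mul]
    have hv' : (v : ℝ) ≠ 0 := by exact_mod_cast hv
    have e1 : Real.exp (-(x - v) ^ 2 / (2 * v)) = Real.exp (-(x ^ 2 + v ^ 2) / (2 * v)) * Real.exp x := by
      rw [← Real.exp_add]; congr 1; field_simp; ring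
    have e2 : Real.exp (-(-x - v) ^ 2 / (2 * v)) = Real.exp (-(x ^ 2 + v ^ 2) / (2 * v)) * Real.exp (-x) := by
      rw [← Real.exp_add]; congr 1; field_simp; ring
    rw [e1, e2, Real.tanh_neg, Real.tanh_eq_sinh_div_cosh, ← Real.cosh_add_sinh x, ← Real.cosh_sub_sinh x]
    have hc := (Real.cosh_pos x).ne'
    field_simp
    ring
  have h := integral_neg_eq_self F volume
  simp_rw [hodd, integral_neg] at h
  linarith

lemma gauss_exp_integral (m : ℝ) (v : ℝ≥0) (t : ℝ) :
    ∫ x, Real.exp (t * x) ∂(gaussianReal m v) = Real.exp (m * t + v * t ^ 2 / 2) := by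
  have := congrFun (mgf_id_gaussianReal (μ := m) (v := v)) t
  simpa [mgf] using this

lemma integrable_tanh (μ : Measure ℝ) [IsFiniteMeasure μ] : Integrable Real.tanh μ :=
  Integrable.of_bound measurable_tanh'.aestronglyMeasurable 1
    (ae_of_all _ fun x => by simpa using (Real.abs_tanh_lt_one x).le)

lemma integrable_tanh_sq (μ : Measure ℝ) [IsFiniteMeasure μ] :
    Integrable (fun x => Real.tanh x ^ 2) μ :=
  Integrable.of_bound (measurable_tanh'.pow_const 2).aestronglyMeasurable 1
    (ae_of_all _ fun x => by simpa using (Real.tanh_sq_lt_one x).le)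

lemma tanh_mean_le (v : ℝ≥0) : ∫ x, Real.tanh x ∂(gaussianReal v v) ≤ v := by
  have i1 : Integrable (fun x => Real.exp (-x)) (gaussianReal v v) := by
    simpa using integrable_exp_mul_gaussianReal (μ := v) (v := v) (-1)
  have i2 : Integrable (fun x => Real.exp (-(2 * x))) (gaussianReal v v) := by
    simpa using integrable_exp_mul_gaussianReal (μ := v) (v := v) (-2)
  have e1 : ∫ x, Real.exp (-x) ∂(gaussianReal v v) = Real.exp (-v / 2) := by
    have := gauss_exp_integral v v (-1)
    simp only [neg_mul, one_mul] at this
    rw [this]; congr 1; ring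
  have e2 : ∫ x, Real.exp (-(2 * x)) ∂(gaussianReal v v) = 1 := by
    have := gauss_exp_integral v v (-2)
    simp only [neg_mul] at this
    rw [this]; rw [← Real.exp_zero]; congr 1; ring
  have i3 : Integrable (fun x => 1 + Real.exp (-(2 * x))) (gaussianReal v v) :=
    (integrable_const _).add i2
  have i4 : Integrable (fun x => 2 * Real.exp (-x) - (1 + Real.exp (-(2 * x))) / 2)
    (gaussianReal v v) := (i1.const_mul 2).sub (i3.div_const 2)
  calc _ ≤ ∫ x, (1 - (2 * Real.exp (-x) - (1 + Real.exp (-(2 * x))) / 2)) ∂(gaussianReal v v) :=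
        integral_mono (integrable_tanh _) ((integrable_const _).sub i4) one_sub_tanh_ge
    _ = 1 - (2 * Real.exp (-v / 2) - (1 + 1) / 2) := by
        rw [integral_sub (integrable_const _) i4, integral_sub (i1.const_mul 2) (i3.div_const 2),
          integral_div, integral_add (integrable_const _) i2, integral_const_mul, e1, e2]
        simp
    _ ≤ v := by
        have := Real.add_one_le_exp (-(v : ℝ) / 2)
        linarith

lemma abs_cube_le (x : ℝ) : |x| ^ 3 ≤ 6 * (Real.exp (1 * x) + Real.exp (-1 * x)) := by
  have h := Real.pow_div_factorial_le_exp |x| (abs_nonneg x) 3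
  have h2 : Real.exp |x| ≤ Real.exp (1 * x) + Real.exp (-1 * x) := by
    rcases abs_cases x with ⟨h, _⟩ | ⟨h, _⟩ <;> rw [h] <;>
      simp [Real.exp_nonneg]
  norm_num [Nat.factorial] at h
  norm_num at h2
  norm_num
  linarith

lemma gauss_cube (a : ℝ) (ha0 : 0 ≤ a) (ha : a ≤ 1) :
    Integrable (fun x => |x| ^ 3) (gaussianReal a 1) ∧
    ∫ x, |x| ^ 3 ∂(gaussianReal a 1) ≤ 12 * Real.exp (3 / 2) := by
  have i1 := integrable_exp_mul_gaussianReal (μ := a) (v := 1) 1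
  have i2 := integrable_exp_mul_gaussianReal (μ := a) (v := 1) (-1)
  have i3 : Integrable (fun x => Real.exp (1 * x) + Real.exp (-1 * x)) (gaussianReal a 1) := i1.add i2
  have i : Integrable (fun x => |x| ^ 3) (gaussianReal a 1) := by
    refine (i3.const_mul 6).mono' (by fun_prop) (ae_of_all _ fun x => ?_)
    rw [Real.norm_eq_abs, abs_of_nonneg (by positivity)]
    exact abs_cube_le x
  refine ⟨i, ?_⟩
  calc _ ≤ ∫ x, 6 * (Real.exp (1 * x) + Real.exp (-1 * x)) ∂(gaussianReal a 1) :=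
        integral_mono i (i3.const_mul 6) abs_cube_le
    _ = 6 * (Real.exp (a * 1 + (1 : ℝ≥0) * 1 ^ 2 / 2) + Real.exp (a * (-1) + (1 : ℝ≥0) * (-1) ^ 2 / 2)) := by
        rw [integral_const_mul, integral_add i1 i2, gauss_exp_integral, gauss_exp_integral]
    _ ≤ _ := by
        have h1 : Real.exp (a * 1 + (1 : ℝ≥0) * 1 ^ 2 / 2) ≤ Real.exp (3 / 2) := by
          apply Real.exp_le_exp.2; norm_num; linarith
        have h2 : Real.exp (a * (-1) + (1 : ℝ≥0) * (-1) ^ 2 / 2) ≤ Real.exp (3 / 2) := by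
          apply Real.exp_le_exp.2; norm_num; linarith
        linarith

lemma gauss_sq (a : ℝ) : ∫ x, x ^ 2 ∂(gaussianReal a 1) = 1 + a ^ 2 := by
  have h := variance_eq_sub (memLp_id_gaussianReal (μ := a) (v := 1) 2)
  rw [variance_id_gaussianReal] at h
  simp at h
  linarith

lemma two_var {Ω : Type*} [MeasurableSpace Ω] (P : Measure Ω) [IsProbabilityMeasure P]
    (U V : Ω → ℝ) (hU : Measurable U) (hV : Measurable V) (hind : IndepFun U V P)
    (v : ℝ≥0) (hv : v ≠ 0) (a : ℝ) (ha0 : 0 ≤ a) (ha : a ≤ 1)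
    (lU : P.map U = gaussianReal v v) (lV : P.map V = gaussianReal a 1) :
    ∫ ω, (Real.log (Real.cosh (U ω + a * V ω)) - Real.log (Real.cosh (U ω))) ∂P
      ≤ a ^ 2 / 2 + a ^ 2 * v / 2 + a ^ 4 / 2 + 4 * Real.exp (3 / 2) * a ^ 3 := by
  have tr : ∀ (X : Ω → ℝ) (hX : Measurable X) (f : ℝ → ℝ) (hf : Measurable f),
      ∫ ω, f (X ω) ∂P = ∫ x, f x ∂(P.map X) := fun X hX f hf =>
    (integral_map hX.aemeasurable hf.aestronglyMeasurable).symm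
  have tri : ∀ (X : Ω → ℝ) (hX : Measurable X) (f : ℝ → ℝ) (hf : Integrable f (P.map X)),
      Integrable (fun ω => f (X ω)) P := fun X hX f hf => hf.comp_measurable hX
  have mt := measurable_tanh'
  set M := ∫ x, Real.tanh x ∂(gaussianReal v v) with hM
  have hMle : M ≤ v := tanh_mean_le v
  have hM2 : ∫ x, Real.tanh x ^ 2 ∂(gaussianReal v v) = M := by
    have := nishimori v hv
    rw [integral_sub (integrable_tanh _) (integrable_tanh_sq _)] at this
    linarith
  have hM0 : 0 ≤ M := by rw [← hM2]; exact integral_nonneg fun x => sq_nonneg _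
  have iU : Integrable U P := tri U hU id (by
    rw [lU]; exact (memLp_id_gaussianReal (μ := v) (v := v) 1).integrable (by simp))
  have iV : Integrable V P := tri V hV id (by
    rw [lV]; exact (memLp_id_gaussianReal (μ := a) (v := 1) 1).integrable (by simp))
  have iV2 : Integrable (fun ω => V ω ^ 2) P := tri V hV (fun x => x ^ 2) (by
    rw [lV]; exact (memLp_id_gaussianReal (μ := a) (v := 1) 2).integrable_sq)
  have iV3 : Integrable (fun ω => |V ω| ^ 3) P := tri V hV (fun x => |x| ^ 3) (by
    rw [lV]; exact (gauss_cube a ha0 ha).1)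
  have iT : Integrable (fun ω => Real.tanh (U ω)) P := tri U hU _ (by
    rw [lU]; exact integrable_tanh _)
  have iS : Integrable (fun ω => 1 - Real.tanh (U ω) ^ 2) P :=
    (integrable_const _).sub (tri U hU _ (by rw [lU]; exact integrable_tanh_sq _))
  have ind1 : IndepFun (fun ω => Real.tanh (U ω)) V P := hind.comp mt measurable_id
  have ind2 : IndepFun (fun ω => 1 - Real.tanh (U ω) ^ 2) (fun ω => V ω ^ 2) P :=
    hind.comp (φ := fun x => 1 - Real.tanh x ^ 2) (ψ := fun x => x ^ 2)
      (measurable_const.sub (mt.pow_const 2)) (measurable_id.pow_const 2)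
  have i1 : Integrable (fun ω => Real.tanh (U ω) * V ω) P := ind1.integrable_mul iT iV
  have i2 : Integrable (fun ω => (1 - Real.tanh (U ω) ^ 2) * V ω ^ 2) P := ind2.integrable_mul iS iV2
  have e1 : ∫ ω, Real.tanh (U ω) * V ω ∂P = M * a := by
    rw [ind1.integral_fun_mul_eq_mul_integral iT.aestronglyMeasurable iV.aestronglyMeasurable,
      tr U hU _ mt, lU, tr V hV (fun x => x) measurable_id, lV, integral_id_gaussianReal]
  have e2 : ∫ ω, (1 - Real.tanh (U ω) ^ 2) * V ω ^ 2 ∂P = (1 - M) * (1 + a ^ 2) := by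
    rw [ind2.integral_fun_mul_eq_mul_integral iS.aestronglyMeasurable iV2.aestronglyMeasurable,
      tr V hV (fun x => x ^ 2) (measurable_id.pow_const 2), lV, gauss_sq,
      tr U hU (fun x => 1 - Real.tanh x ^ 2) (measurable_const.sub (mt.pow_const 2)), lU,
      integral_sub (integrable_const _) (integrable_tanh_sq _), hM2]
    simp
  have e3 : ∫ ω, |V ω| ^ 3 ∂P ≤ 12 * Real.exp (3 / 2) := by
    rw [tr V hV (fun x => |x| ^ 3) (by fun_prop), lV]
    exact (gauss_cube a ha0 ha).2
  have ilc : ∀ W : Ω → ℝ, Measurable W → Integrable W P →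
      Integrable (fun ω => Real.log (Real.cosh (W ω))) P := by
    intro W mW iW
    refine iW.abs.mono' ?_ (ae_of_all _ fun ω => ?_)
    · exact (Real.measurable_log.comp (Real.continuous_cosh.measurable.comp mW)).aestronglyMeasurable
    · rw [Real.norm_eq_abs, abs_of_nonneg (logcosh_nonneg _)]
      exact logcosh_le_abs _
  calc _ ≤ ∫ ω, (a * (Real.tanh (U ω) * V ω) + a ^ 2 / 2 * ((1 - Real.tanh (U ω) ^ 2) * V ω ^ 2)
        + a ^ 3 / 3 * |V ω| ^ 3) ∂P := by
        refine integral_mono ((ilc _ (by fun_prop) (iU.add (iV.const_mul a))).sub (ilc U hU iU))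
          (((i1.const_mul a).add (i2.const_mul _)).add (iV3.const_mul _)) fun ω => ?_
        have := logcosh_taylor (U ω) (a * V ω)
        rw [abs_mul, abs_of_nonneg ha0, mul_pow, mul_pow] at this
        simp only
        nlinarith
    _ = a * (M * a) + a ^ 2 / 2 * ((1 - M) * (1 + a ^ 2)) + a ^ 3 / 3 * ∫ ω, |V ω| ^ 3 ∂P := by
        have i12 : Integrable (fun ω => a * (Real.tanh (U ω) * V ω)
          + a ^ 2 / 2 * ((1 - Real.tanh (U ω) ^ 2) * V ω ^ 2)) P :=
          (i1.const_mul a).add (i2.const_mul _)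
        rw [integral_add i12 (iV3.const_mul _),
          integral_add (i1.const_mul a) (i2.const_mul _), integral_const_mul, integral_const_mul,
          integral_const_mul, e1, e2]
    _ ≤ _ := by
        have h1 : a ^ 3 / 3 * ∫ ω, |V ω| ^ 3 ∂P ≤ a ^ 3 / 3 * (12 * Real.exp (3 / 2)) :=
          mul_le_mul_of_nonneg_left e3 (by positivity)
        have h2 : 0 ≤ a ^ 4 * M := by positivity
        have h3 : a ^ 2 * M ≤ a ^ 2 * v := mul_le_mul_of_nonneg_left hMle (by positivity)
        nlinarith

lemma info_bound {ι α : Type*} [Fintype ι] [Nonempty ι] [MeasurableSpace α] (γ : Measure α)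
    [IsProbabilityMeasure γ] (κ : ι → Measure α) (hpr : ∀ s, IsProbabilityMeasure (κ s))
    (f : ι → α → ℝ) (g H : α → ℝ) (mf : ∀ s, Measurable (f s)) (mg : Measurable g)
    (c : ℝ) (hc : 0 < c) (hκ : ∀ s, κ s = γ.withDensity (fun x => ENNReal.ofReal (f s x)))
    (hg1 : ∫⁻ x, ENNReal.ofReal (g x) ∂γ ≤ 1)
    (hcf : ∀ s x, c ≤ f s x) (hcg : ∀ x, c ≤ g x)
    (hfH : ∀ s x, f s x ≤ Real.exp (H x)) (hgH : ∀ x, g x ≤ Real.exp (H x))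
    (iH : ∀ s, Integrable H (κ s)) :
    mutualInfoUnif κ ≤ (Fintype.card ι : ℝ)⁻¹ * ∑ s, ∫ x, Real.log (f s x / g x) ∂(κ s) := by
  have hN : (0 : ℝ) < Fintype.card ι := by exact_mod_cast Fintype.card_pos
  have hN' : (Fintype.card ι : ℝ≥0∞) ≠ 0 := by exact_mod_cast Fintype.card_ne_zero
  set N : ℝ := (Fintype.card ι : ℝ) with hNdef
  set F : α → ℝ := fun x => N⁻¹ * ∑ t, f t x with hF
  have fpos : ∀ s x, 0 < f s x := fun s x => hc.trans_le (hcf s x)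
  have gpos : ∀ x, 0 < g x := fun x => hc.trans_le (hcg x)
  have mF : Measurable F := (Finset.measurable_fun_sum _ fun t _ => mf t).const_mul _
  have hcF : ∀ x, c ≤ F x := by
    intro x
    have : ∑ t : ι, c ≤ ∑ t, f t x := Finset.sum_le_sum fun t _ => hcf t x
    simp only [Finset.sum_const, Finset.card_univ, nsmul_eq_mul] at this
    rw [hF]; simp only
    rw [inv_mul_eq_div, le_div_iff₀ hN]; linarith
  have hFH : ∀ x, F x ≤ Real.exp (H x) := by
    intro x
    have : ∑ t, f t x ≤ ∑ t : ι, Real.exp (H x) := Finset.sum_le_sum fun t _ => hfH t x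
    simp only [Finset.sum_const, Finset.card_univ, nsmul_eq_mul] at this
    rw [hF]; simp only
    rw [inv_mul_eq_div, div_le_iff₀ hN]; linarith
  have Fpos : ∀ x, 0 < F x := fun x => hc.trans_le (hcF x)
  set mix : Measure α := (Fintype.card ι : ℝ≥0∞)⁻¹ • ∑ t : ι, κ t with hmix
  have hmixd : mix = γ.withDensity (fun x => ENNReal.ofReal (F x)) := by
    ext A hA
    rw [hmix, Measure.smul_apply, Measure.finsetSum_apply, withDensity_apply _ hA, smul_eq_mul]
    have : ∀ x, ENNReal.ofReal (F x) = (Fintype.card ι : ℝ≥0∞)⁻¹ * ∑ t, ENNReal.ofReal (f t x) := by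
      intro x
      rw [hF]; simp only
      rw [ENNReal.ofReal_mul (by positivity), ENNReal.ofReal_sum_of_nonneg fun t _ => (fpos t x).le,
        ENNReal.ofReal_inv_of_pos hN, hNdef, ENNReal.ofReal_natCast]
    simp_rw [this]
    rw [lintegral_const_mul _ (by fun_prop), lintegral_finsetSum _ (by fun_prop)]
    congr 1
    refine Finset.sum_congr rfl fun t _ => ?_
    rw [hκ t, withDensity_apply _ hA]
  have : IsFiniteMeasure mix := by
    rw [hmix]
    constructor
    rw [Measure.smul_apply, Measure.finsetSum_apply]
    simp only [measure_univ, smul_eq_mul]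
    apply ENNReal.mul_lt_top
    · exact ENNReal.inv_lt_top.2 (pos_iff_ne_zero.2 hN')
    · simp
  have hκmix : ∀ s, κ s = mix.withDensity (fun x => ENNReal.ofReal (f s x / F x)) := by
    intro s
    have mr : Measurable (fun x => f s x / F x) := (mf s).div mF
    rw [hmixd, ← withDensity_mul _ mF.ennreal_ofReal mr.ennreal_ofReal, hκ s]
    congr 1
    ext x
    simp only [Pi.mul_apply]
    rw [← ENNReal.ofReal_mul (Fpos x).le, mul_div_cancel₀ _ (Fpos x).ne']
  have hkl : ∀ s, klDivR (κ s) mix = ∫ x, Real.log (f s x / F x) ∂(κ s) := by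
    intro s
    unfold klDivR
    apply integral_congr_ae
    have h1 : (κ s).rnDeriv mix =ᵐ[mix] fun x => ENNReal.ofReal (f s x / F x) := by
      conv_lhs => rw [hκmix s]
      exact Measure.rnDeriv_withDensity _ (((mf s).div mF).ennreal_ofReal)
    have hac : κ s ≪ mix := by
      rw [hκmix s]; exact withDensity_absolutelyContinuous _ _
    filter_upwards [hac.ae_le h1] with x hx
    rw [hx, ENNReal.toReal_ofReal (div_pos (fpos s x) (Fpos x)).le]
  have ilog : ∀ (q : α → ℝ), Measurable q → (∀ x, c ≤ q x) → (∀ x, q x ≤ Real.exp (H x)) →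
      ∀ s, Integrable (fun x => Real.log (q x)) (κ s) := by
    intro q mq h1 h2 s
    refine ((integrable_const |Real.log c|).add (iH s).abs).mono' (mq.log.aestronglyMeasurable)
      (ae_of_all _ fun x => ?_)
    have a1 : Real.log c ≤ Real.log (q x) := Real.log_le_log hc (h1 x)
    have a2 : Real.log (q x) ≤ H x := by
      rw [← Real.log_exp (H x)]; exact Real.log_le_log (hc.trans_le (h1 x)) (h2 x)
    simp only [Pi.add_apply, Real.norm_eq_abs]
    rw [abs_le]
    constructor
    · linarith [neg_abs_le (Real.log c), abs_nonneg (H x)]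
    · linarith [le_abs_self (H x), abs_nonneg (Real.log c)]
  have mgF : Measurable (fun x => g x / F x) := mg.div mF
  have hlint : ∫⁻ x, ENNReal.ofReal (g x / F x) ∂mix ≤ 1 := by
    rw [hmixd, lintegral_withDensity_eq_lintegral_mul _ (by fun_prop) mgF.ennreal_ofReal]
    refine le_trans (le_of_eq ?_) hg1
    congr 1
    ext x
    simp only [Pi.mul_apply]
    rw [← ENNReal.ofReal_mul (Fpos x).le, mul_div_cancel₀ _ (Fpos x).ne']
  have igFmix : Integrable (fun x => g x / F x) mix := by
    refine ⟨mgF.aestronglyMeasurable, ?_⟩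
    rw [hasFiniteIntegral_iff_ofReal (ae_of_all _ fun x => (div_pos (gpos x) (Fpos x)).le)]
    exact hlint.trans_lt ENNReal.one_lt_top
  have hintmix : ∫ x, g x / F x ∂mix ≤ 1 := by
    rw [integral_eq_lintegral_of_nonneg_ae (ae_of_all _ fun x => (div_pos (gpos x) (Fpos x)).le)
      mgF.aestronglyMeasurable]
    exact ENNReal.toReal_le_of_le_ofReal zero_le_one (by simpa using hlint)
  have igF : ∀ s, Integrable (fun x => g x / F x) (κ s) := by
    intro s
    have h1 : Integrable (fun x => g x / F x) (∑ t, κ t) := by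
      rwa [hmix, integrable_smul_measure (by simp) (by simp [hN'])] at igFmix
    exact (integrable_finsetSum_measure.1 h1) s (Finset.mem_univ s)
  have hmixint : ∫ x, g x / F x ∂mix = N⁻¹ * ∑ s, ∫ x, g x / F x ∂(κ s) := by
    rw [hmix, integral_smul_measure, integral_finsetSum_measure fun s _ => igF s]
    simp [hNdef]
  have key : ∀ s, klDivR (κ s) mix ≤ ∫ x, Real.log (f s x / g x) ∂(κ s) + (∫ x, g x / F x ∂(κ s) - 1) := by
    intro s
    have := hpr s
    have il1 : Integrable (fun x => Real.log (f s x / F x)) (κ s) := by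
      simp_rw [fun x => Real.log_div (fpos s x).ne' (Fpos x).ne']
      exact (ilog _ (mf s) (hcf s) (hfH s) s).sub (ilog F mF hcF hFH s)
    have il2 : Integrable (fun x => Real.log (f s x / g x)) (κ s) := by
      simp_rw [fun x => Real.log_div (fpos s x).ne' (gpos x).ne']
      exact (ilog _ (mf s) (hcf s) (hfH s) s).sub (ilog g mg hcg hgH s)
    have il3 : Integrable (fun x => g x / F x - 1) (κ s) := (igF s).sub (integrable_const _)
    rw [hkl s]
    calc _ ≤ ∫ x, (Real.log (f s x / g x) + (g x / F x - 1)) ∂(κ s) := by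
          refine integral_mono il1 (il2.add il3) fun x => ?_
          have h := Real.log_le_sub_one_of_pos (div_pos (gpos x) (Fpos x))
          simp only
          rw [Real.log_div (fpos s x).ne' (Fpos x).ne', Real.log_div (fpos s x).ne' (gpos x).ne']
          rw [Real.log_div (gpos x).ne' (Fpos x).ne'] at h
          linarith
      _ = _ := by
          rw [integral_add il2 il3, integral_sub (igF s) (integrable_const _)]
          simp
  unfold mutualInfoUnif
  calc _ ≤ N⁻¹ * ∑ s, (∫ x, Real.log (f s x / g x) ∂(κ s) + (∫ x, g x / F x ∂(κ s) - 1)) := by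
        apply mul_le_mul_of_nonneg_left _ (by positivity)
        exact Finset.sum_le_sum fun s _ => key s
    _ = N⁻¹ * ∑ s, ∫ x, Real.log (f s x / g x) ∂(κ s) + (∫ x, g x / F x ∂mix - 1) := by
        rw [hmixint, Finset.sum_add_distrib, Finset.sum_sub_distrib]
        simp only [Finset.sum_const, Finset.card_univ, nsmul_eq_mul, mul_one]
        rw [← hNdef]
        field_simp
    _ ≤ _ := by linarith

lemma gauss_density (m : ℝ) : gaussianReal m 1 =
    (gaussianReal 0 1).withDensity (fun x => ENNReal.ofReal (Real.exp (m * x - m ^ 2 / 2))) := by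
  rw [gaussianReal_of_var_ne_zero _ one_ne_zero, gaussianReal_of_var_ne_zero _ one_ne_zero,
    ← withDensity_mul _ (by fun_prop) (by fun_prop)]
  congr 1
  ext x
  simp only [Pi.mul_apply, gaussianPDF, gaussianPDFReal]
  rw [← ENNReal.ofReal_mul (by positivity), mul_assoc _ (Real.exp _), ← Real.exp_add]
  congr 3
  simp
  ring

lemma gaussPi_density {p : ℕ} (m : Fin p → ℝ) : gaussPi m =
    (gaussPi (fun _ => 0)).withDensity
      (fun x => ENNReal.ofReal (Real.exp (∑ i, m i * x i - ∑ i, m i ^ 2 / 2))) := by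
  unfold gaussPi
  symm
  have he : ∀ x : Fin p → ℝ, ENNReal.ofReal (Real.exp (∑ i, m i * x i - ∑ i, m i ^ 2 / 2))
      = ∏ i, ENNReal.ofReal (Real.exp (m i * x i - m i ^ 2 / 2)) := by
    intro x
    rw [← Finset.sum_sub_distrib, Real.exp_sum, ENNReal.ofReal_prod_of_nonneg]
    intros; positivity
  simp_rw [he]
  refine (Measure.pi_eq fun s hs => ?_).symm
  rw [withDensity_apply _ (MeasurableSet.univ_pi hs), ← lintegral_indicator (MeasurableSet.univ_pi hs)]
  have h2 : ∀ x : Fin p → ℝ, (Set.univ.pi s).indicator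
      (fun x => ∏ i, ENNReal.ofReal (Real.exp (m i * x i - m i ^ 2 / 2))) x
      = ∏ i, (s i).indicator (fun y => ENNReal.ofReal (Real.exp (m i * y - m i ^ 2 / 2))) (x i) := by
    intro x
    by_cases hx : x ∈ Set.univ.pi s
    · rw [Set.indicator_of_mem hx]
      refine Finset.prod_congr rfl fun i _ => ?_
      rw [Set.indicator_of_mem (hx i (Set.mem_univ i))]
    · rw [Set.indicator_of_notMem hx]
      simp only [Set.mem_univ_pi, not_forall] at hx
      obtain ⟨i, hi⟩ := hx
      symm
      apply Finset.prod_eq_zero (Finset.mem_univ i)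
      rw [Set.indicator_of_notMem hi]
  simp_rw [h2]
  have hm : ∀ i, Measurable ((s i).indicator
      (fun y => ENNReal.ofReal (Real.exp (m i * y - m i ^ 2 / 2)))) := fun i =>
    Measurable.indicator (by fun_prop) (hs i)
  have hind := iIndepFun_pi (μ := fun _ : Fin p => gaussianReal 0 1) (fun i => (hm i).aemeasurable)
  rw [lintegral_prod_eq_prod_lintegral_of_indepFun Finset.univ _ hind
    (fun i => (hm i).comp (measurable_pi_apply i))]
  refine Finset.prod_congr rfl fun i _ => ?_
  have := (measurePreserving_eval (fun _ : Fin p => gaussianReal 0 1) i).lintegral_comp (hm i)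
  simp only [Function.eval] at this
  rw [this, lintegral_indicator (hs i), ← withDensity_apply _ (hs i), ← gauss_density]

instance gaussPi_prob {p : ℕ} (m : Fin p → ℝ) : IsProbabilityMeasure (gaussPi m) := by
  unfold gaussPi; infer_instance

instance unlabeled_prob {p : ℕ} (m : Fin p → ℝ) : IsProbabilityMeasure (unlabeledLaw m) := by
  unfold unlabeledLaw
  constructor
  simp [ENNReal.inv_two_add_inv_two]

lemma unlabeled_density {p : ℕ} (m : Fin p → ℝ) : unlabeledLaw m =
    (gaussPi (fun _ => 0)).withDensity
      (fun x => ENNReal.ofReal (Real.exp (- ∑ i, m i ^ 2 / 2) * Real.cosh (∑ i, m i * x i))) := by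
  ext A hA
  unfold unlabeledLaw
  rw [gaussPi_density m, gaussPi_density (fun j => - m j), Measure.add_apply, Measure.smul_apply,
    Measure.smul_apply, withDensity_apply _ hA, withDensity_apply _ hA, withDensity_apply _ hA,
    smul_eq_mul, smul_eq_mul, ← lintegral_const_mul _ (by fun_prop),
    ← lintegral_const_mul _ (by fun_prop), ← lintegral_add_left (by fun_prop)]
  congr 1
  ext x
  have h2 : (2 : ℝ≥0∞)⁻¹ = ENNReal.ofReal (2⁻¹) := by
    rw [ENNReal.ofReal_inv_of_pos (by norm_num)]; simp
  rw [h2, ← ENNReal.ofReal_mul (by positivity), ← ENNReal.ofReal_mul (by positivity),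
    ← ENNReal.ofReal_add (by positivity) (by positivity)]
  congr 1
  simp only [neg_mul, Finset.sum_neg_distrib, neg_sq]
  rw [Real.cosh_eq, sub_eq_add_neg, sub_eq_add_neg, Real.exp_add, Real.exp_add]
  ring

lemma law_eval {p : ℕ} (m : Fin p → ℝ) (i : Fin p) :
    (gaussPi m).map (fun x => x i) = gaussianReal (m i) 1 :=
  (measurePreserving_eval (fun j => gaussianReal (m j) 1) i).map_eq

lemma indep_eval {p : ℕ} (m : Fin p → ℝ) :
    iIndepFun (fun (i : Fin p) (x : Fin p → ℝ) => x i) (gaussPi m) :=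
  iIndepFun_pi (X := fun _ y => y) (fun i => aemeasurable_id)

lemma law_sum {p : ℕ} (m : Fin p → ℝ) (a : ℝ) (B : Finset (Fin p)) (hB : ∀ i ∈ B, m i = a) :
    (gaussPi m).map (∑ i ∈ B, fun x : Fin p → ℝ => x i) = gaussianReal (B.card * a) B.card := by
  classical
  induction B using Finset.induction_on with
  | empty =>
    simp only [Finset.sum_empty, Finset.card_empty, Nat.cast_zero, zero_mul, gaussianReal_zero_var]
    have : (0 : (Fin p → ℝ) → ℝ) = fun _ => 0 := rfl
    rw [this, Measure.map_const]
    simp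
  | insert j B hj ih =>
    have h1 := ih fun i hi => hB i (Finset.mem_insert_of_mem hi)
    have hind := (indep_eval m).indepFun_finsetSum_of_notMem
      (fun i => measurable_pi_apply i) hj
    have h2 := gaussianReal_add_gaussianReal_of_indepFun hind h1 (law_eval m j)
    rw [hB j (Finset.mem_insert_self _ _)] at h2
    rw [Finset.sum_insert hj, add_comm, h2, Finset.card_insert_of_notMem hj]
    push_cast
    congr 1
    ring

lemma gaussPi_neg {p : ℕ} (m : Fin p → ℝ) :
    gaussPi (fun j => - m j) = (gaussPi m).map (fun x => -x) := by
  unfold gaussPi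
  have := Measure.pi_map_pi (μ := fun j => gaussianReal (m j) 1) (f := fun _ x => -x)
    (fun i => measurable_neg.aemeasurable)
  rw [show (fun x : Fin p → ℝ => -x) = fun x i => - x i from rfl, this]
  congr 1
  ext1 i
  rw [gaussianReal_map_neg]

lemma integral_unlabeled {p : ℕ} (m : Fin p → ℝ) (F : (Fin p → ℝ) → ℝ) (mF : Measurable F)
    (iF : Integrable F (gaussPi m)) (hF : ∀ x, F (-x) = F x) :
    ∫ x, F x ∂(unlabeledLaw m) = ∫ x, F x ∂(gaussPi m) := by
  have mn : Measurable (fun x : Fin p → ℝ => -x) := measurable_neg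
  have i2 : Integrable F (gaussPi fun j => - m j) := by
    rw [gaussPi_neg, integrable_map_measure mF.aestronglyMeasurable mn.aemeasurable]
    simpa only [Function.comp_def, hF] using iF
  have e2 : ∫ x, F x ∂(gaussPi fun j => - m j) = ∫ x, F x ∂(gaussPi m) := by
    rw [gaussPi_neg, integral_map mn.aemeasurable mF.aestronglyMeasurable]
    simp only [hF]
  unfold unlabeledLaw
  rw [integral_add_measure (iF.smul_measure (by simp)) (i2.smul_measure (by simp)),
    integral_smul_measure, integral_smul_measure, e2]
  simp only [ENNReal.toReal_inv, ENNReal.toReal_ofNat, smul_eq_mul]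
  ring

lemma integrable_abs_sum {p : ℕ} (m : Fin p → ℝ) (a : ℝ) :
    Integrable (fun x : Fin p → ℝ => ∑ i, a * |x i|) (gaussPi m) := by
  refine integrable_finsetSum _ fun i _ => (Integrable.abs ?_).const_mul a
  have : Integrable id ((gaussPi m).map (fun x => x i)) := by
    rw [law_eval]
    exact (memLp_id_gaussianReal (μ := m i) (v := 1) 1).integrable (by simp)
  exact this.comp_measurable (measurable_pi_apply i)

lemma integrable_abs_sum' {p : ℕ} (m : Fin p → ℝ) (a : ℝ) :
    Integrable (fun x : Fin p → ℝ => ∑ i, a * |x i|) (unlabeledLaw m) := by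
  unfold unlabeledLaw
  exact ((integrable_abs_sum _ a).smul_measure (by simp)).add_measure
    ((integrable_abs_sum _ a).smul_measure (by simp))

/-- `a` on `S`, zero elsewhere. -/
def mv {p : ℕ} (a : ℝ) (S : Finset (Fin p)) : Fin p → ℝ := fun j => if j ∈ S then a else 0

/-- density of the unlabeled law. -/
def dens {p : ℕ} (a : ℝ) (S : Finset (Fin p)) (x : Fin p → ℝ) : ℝ :=
  Real.exp (-(S.card * a ^ 2 / 2)) * Real.cosh (∑ i ∈ S, a * x i)

lemma measurable_dens {p : ℕ} (a : ℝ) (S : Finset (Fin p)) : Measurable (dens a S) := by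
  unfold dens
  exact (Real.continuous_cosh.measurable.comp (by fun_prop)).const_mul _

lemma unlabeled_dens {p : ℕ} (a : ℝ) (S : Finset (Fin p)) : unlabeledLaw (mv a S) =
    (gaussPi (fun _ => 0)).withDensity (fun x => ENNReal.ofReal (dens a S x)) := by
  rw [unlabeled_density]
  congr 1
  ext x
  simp only [mv, dens, ite_pow, ite_mul, zero_mul, Finset.sum_ite_mem, Finset.univ_inter, ← Finset.sum_div]
  simp

lemma sum_le_H {p : ℕ} (a : ℝ) (ha : 0 ≤ a) (S : Finset (Fin p)) (x : Fin p → ℝ) :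
    |∑ i ∈ S, a * x i| ≤ ∑ i, a * |x i| := by
  calc _ ≤ ∑ i ∈ S, |a * x i| := Finset.abs_sum_le_sum_abs _ _
    _ = ∑ i ∈ S, a * |x i| := by simp_rw [abs_mul, abs_of_nonneg ha]
    _ ≤ _ := Finset.sum_le_sum_of_subset_of_nonneg (Finset.subset_univ _)
      fun i _ _ => by positivity

lemma dens_le {p : ℕ} (a : ℝ) (ha : 0 ≤ a) (S : Finset (Fin p)) (x : Fin p → ℝ) :
    dens a S x ≤ Real.exp (∑ i, a * |x i|) := by
  unfold dens
  have h1 : Real.exp (-(S.card * a ^ 2 / 2)) ≤ 1 := Real.exp_le_one_iff.2 (by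
    have : 0 ≤ (S.card : ℝ) * a ^ 2 / 2 := by positivity
    linarith)
  have h2 := cosh_le_exp_abs' (∑ i ∈ S, a * x i)
  have h3 := Real.exp_le_exp.2 (sum_le_H a ha S x)
  have h4 := Real.cosh_pos (∑ i ∈ S, a * x i)
  nlinarith

lemma dens_ge {p : ℕ} (a : ℝ) (S : Finset (Fin p)) (x : Fin p → ℝ) :
    Real.exp (-(p * a ^ 2 / 2)) ≤ dens a S x := by
  unfold dens
  have h1 : Real.exp (-(p * a ^ 2 / 2)) ≤ Real.exp (-(S.card * a ^ 2 / 2)) := by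
    apply Real.exp_le_exp.2
    have : (S.card : ℝ) ≤ p := by
      have := Finset.card_le_univ S
      simp at this
      exact_mod_cast this
    nlinarith [sq_nonneg a]
  have h2 := Real.one_le_cosh (∑ i ∈ S, a * x i)
  nlinarith [Real.exp_pos (-(S.card * a ^ 2 / 2))]

lemma kl_bound {p : ℕ} (a : ℝ) (ha0 : 0 < a) (ha : a ≤ 1) (B : Finset (Fin p)) (hB : B.card ≠ 0)
    (j : Fin p) (hj : j ∉ B) :
    ∫ x, Real.log (dens a (insert j B) x / dens a B x) ∂(unlabeledLaw (mv a (insert j B)))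
      ≤ a ^ 2 * (B.card * a ^ 2) / 2 + a ^ 4 / 2 + 4 * Real.exp (3 / 2) * a ^ 3 := by
  have hlog : ∀ x, Real.log (dens a (insert j B) x / dens a B x)
      = (Real.log (Real.cosh (∑ i ∈ B, a * x i + a * x j)) - Real.log (Real.cosh (∑ i ∈ B, a * x i)))
        - a ^ 2 / 2 := by
    intro x
    unfold dens
    rw [Real.log_div (mul_pos (Real.exp_pos _) (Real.cosh_pos _)).ne'
      (mul_pos (Real.exp_pos _) (Real.cosh_pos _)).ne',
      Real.log_mul (Real.exp_pos _).ne' (Real.cosh_pos _).ne',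
      Real.log_mul (Real.exp_pos _).ne' (Real.cosh_pos _).ne', Real.log_exp, Real.log_exp,
      Finset.card_insert_of_notMem hj, Finset.sum_insert hj, add_comm (a * x j)]
    push_cast
    ring
  simp_rw [hlog]
  have mlc : ∀ W : (Fin p → ℝ) → ℝ, Measurable W →
      Measurable (fun x => Real.log (Real.cosh (W x))) := fun W mW =>
    Real.measurable_log.comp (Real.continuous_cosh.measurable.comp mW)
  set m := mv a (insert j B)
  have ilc : ∀ W : (Fin p → ℝ) → ℝ, Measurable W → (∀ x, |W x| ≤ ∑ i, a * |x i|) →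
      Integrable (fun x => Real.log (Real.cosh (W x))) (gaussPi m) := by
    intro W mW hW
    refine (integrable_abs_sum m a).mono' (mlc W mW).aestronglyMeasurable (ae_of_all _ fun x => ?_)
    rw [Real.norm_eq_abs, abs_of_nonneg (logcosh_nonneg _)]
    exact (logcosh_le_abs _).trans (hW x)
  have i1 := ilc (fun x => ∑ i ∈ B, a * x i + a * x j) (by fun_prop) (fun x => by
    have := sum_le_H a ha0.le (insert j B) x
    rwa [Finset.sum_insert hj, add_comm] at this)
  have i2 := ilc (fun x => ∑ i ∈ B, a * x i) (by fun_prop) (sum_le_H a ha0.le B)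
  have m1 := mlc (fun x => ∑ i ∈ B, a * x i + a * x j) (by fun_prop)
  have m2 := mlc (fun x => ∑ i ∈ B, a * x i) (by fun_prop)
  have i12 : Integrable (fun x : Fin p → ℝ => Real.log (Real.cosh (∑ i ∈ B, a * x i + a * x j))
      - Real.log (Real.cosh (∑ i ∈ B, a * x i))) (gaussPi m) := i1.sub i2
  have m12 : Measurable (fun x : Fin p → ℝ => Real.log (Real.cosh (∑ i ∈ B, a * x i + a * x j))
      - Real.log (Real.cosh (∑ i ∈ B, a * x i)) - a ^ 2 / 2) := (m1.sub m2).sub_const _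
  rw [integral_unlabeled m _ m12 (i12.sub (integrable_const _))]
  swap
  · intro x
    simp only [Pi.neg_apply, mul_neg, Finset.sum_neg_distrib]
    rw [← neg_add, Real.cosh_neg, Real.cosh_neg]
  rw [integral_sub i12 (integrable_const _)]
  have hS := law_sum m a B (fun i hi => by simp [m, mv, hi])
  have hind := (indep_eval m).indepFun_finsetSum_of_notMem (fun i => measurable_pi_apply i) hj
  set v : ℝ≥0 := B.card * NNReal.mk (a ^ 2) (sq_nonneg a) with hv
  have hvr : (v : ℝ) = B.card * a ^ 2 := by rw [hv]; push_cast; rfl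
  have hUeq : (fun x : Fin p → ℝ => ∑ i ∈ B, a * x i)
      = (fun y => a * y) ∘ (∑ i ∈ B, fun x : Fin p → ℝ => x i) := by
    ext x; simp [Finset.mul_sum, Finset.sum_apply]
  have lU : (gaussPi m).map (fun x => ∑ i ∈ B, a * x i) = gaussianReal v v := by
    rw [hUeq, ← Measure.map_map (by fun_prop) (by fun_prop), hS, gaussianReal_map_const_mul, hvr, hv]
    congr 1 <;> ring
  have lV : (gaussPi m).map (fun x => x j) = gaussianReal a 1 := by
    rw [law_eval]; simp [m, mv]
  have hind2 : IndepFun (fun x : Fin p → ℝ => ∑ i ∈ B, a * x i) (fun x => x j) (gaussPi m) := by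
    rw [hUeq]
    exact hind.comp (φ := fun y => a * y) (ψ := id) (by fun_prop) measurable_id
  have hv0 : v ≠ 0 := by
    intro h
    have : (v : ℝ) = 0 := by rw [h]; rfl
    rw [hvr] at this
    have hB' : (B.card : ℝ) ≠ 0 := by exact_mod_cast hB
    have := mul_ne_zero hB' (pow_ne_zero 2 ha0.ne')
    contradiction
  have := two_var (gaussPi m) _ _ (by fun_prop) (by fun_prop) hind2 v hv0 a ha0.le ha lU lV
  rw [hvr] at this
  simp only [integral_const, probReal_univ, one_smul]
  linarith

lemma stilde_spec {p k : ℕ} (hk : 2 ≤ k) {T : Finset (Fin p)} (hT : T ∈ stildeF p k) :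
    ∃ j, j ∉ Finset.univ.filter (fun i : Fin p => (i : ℕ) < k - 1) ∧
      T = insert j (Finset.univ.filter (fun i : Fin p => (i : ℕ) < k - 1)) ∧
      (Finset.univ.filter (fun i : Fin p => (i : ℕ) < k - 1)).card = k - 1 := by
  unfold stildeF at hT
  rw [Finset.mem_filter, Finset.mem_powersetCard] at hT
  obtain ⟨⟨-, hc⟩, hB⟩ := hT
  set B := Finset.univ.filter (fun i : Fin p => (i : ℕ) < k - 1) with hBd
  have hkp : k ≤ p := by
    have := Finset.card_le_univ T
    simp at this
    omega
  have hBc : B.card = k - 1 := by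
    have := Fin.card_filter_val_lt (n := p) (m := k - 1)
    rw [hBd, this]; omega
  have hsub : B ⊆ T := fun i hi => hB i (by simpa [hBd] using hi)
  have h1 : (T \ B).card = 1 := by
    rw [Finset.card_sdiff_of_subset hsub]; omega
  obtain ⟨j, hj⟩ := Finset.card_eq_one.1 h1
  have hjm : j ∈ T \ B := by rw [hj]; simp
  refine ⟨j, (Finset.mem_sdiff.1 hjm).2, ?_, hBc⟩
  rw [← Finset.sdiff_union_of_subset hsub, hj]
  rfl

lemma info_final (lam : ℝ) (hlam : lam ∈ Set.Ioo (0 : ℝ) 1) (p k : ℕ) (hk : 2 ≤ k) :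
    mutualInfoUnif (fun T : {T : Finset (Fin p) // T ∈ stildeF p k} =>
          unlabeledLaw (muVec p k lam T.1))
      ≤ lam ^ 2 / (2 * k) + (lam / k) * (lam / k / 2 + 4 * Real.exp (3 / 2) * √(lam / k)) := by
  obtain ⟨h0, h1⟩ := hlam
  have hk0 : (0 : ℝ) < k := by positivity
  set a := √(lam / k) with had
  have ha2 : a ^ 2 = lam / k := Real.sq_sqrt (by positivity)
  have ha0 : 0 < a := Real.sqrt_pos.2 (by positivity)
  have ha1 : a ≤ 1 := by
    apply Real.sqrt_le_one.2
    rw [div_le_one hk0]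
    have : (1 : ℝ) ≤ k := by exact_mod_cast (by omega : 1 ≤ k)
    linarith
  rcases isEmpty_or_nonempty {T : Finset (Fin p) // T ∈ stildeF p k} with he | hne
  · unfold mutualInfoUnif
    simp only [Finset.univ_eq_empty, Finset.sum_empty, mul_zero]
    positivity
  set B := Finset.univ.filter (fun i : Fin p => (i : ℕ) < k - 1) with hBd
  have hm : ∀ T, muVec p k lam T = mv a T := fun T => rfl
  simp_rw [hm]
  refine (info_bound (gaussPi fun _ => 0)
    (fun T : {T : Finset (Fin p) // T ∈ stildeF p k} => unlabeledLaw (mv a T.1)) (fun s => inferInstance) (fun T => dens a T.1) (dens a B)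
    (fun x => ∑ i, a * |x i|) (fun T => measurable_dens a _) (measurable_dens a _)
    (Real.exp (-(p * a ^ 2 / 2))) (Real.exp_pos _) (fun T => unlabeled_dens a _) ?_
    (fun T => dens_ge a _) (dens_ge a _) (fun T => dens_le a ha0.le _) (dens_le a ha0.le _)
    (fun T => integrable_abs_sum' _ a)).trans ?_
  · have := congrArg (fun μ => μ Set.univ) (unlabeled_dens a B)
    simp only [measure_univ, withDensity_apply _ MeasurableSet.univ, Measure.restrict_univ] at this
    exact this.symm.le
  · rw [inv_mul_eq_div, div_le_iff₀ (by exact_mod_cast Fintype.card_pos), mul_comm]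
    rw [← nsmul_eq_mul, ← Finset.card_univ]
    refine Finset.sum_le_card_nsmul _ _ _ fun T _ => ?_
    obtain ⟨j, hj, hT, hBc⟩ := stilde_spec hk T.2
    rw [hT]
    refine (kl_bound a ha0 ha1 B (by rw [hBc]; omega) j hj).trans ?_
    have hc : ((k - 1 : ℕ) : ℝ) ≤ k := by exact_mod_cast Nat.sub_le k 1
    rw [hBc]
    have e3 : a ^ 3 = lam / k * a := by rw [← ha2]; ring
    have e4 : a ^ 4 = lam / k * (lam / k) := by rw [← ha2]; ring
    rw [e3, e4, ha2]
    have : lam / k * (((k - 1 : ℕ) : ℝ) * (lam / k)) / 2 ≤ lam / k * (k * (lam / k)) / 2 := by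
      gcongr
    have e5 : lam / k * (k * (lam / k)) / 2 = lam ^ 2 / (2 * k) := by field_simp
    linarith

/-- Lemma 10: for `λ < 1`, in the asymptotic regime `p, k → ∞` with
`k/p → 0`, the mutual information between one unlabeled sample `x` and the support `S`
(uniform over `𝕊̃`) satisfies `I(x; S) ≤ (1/2)(λ²/k)(1 + o(1))`. -/
theorem stmt9 (lam : ℝ) (hlam : lam ∈ Set.Ioo (0 : ℝ) 1)
    (p k : ℕ → ℕ)
    (hp : Tendsto p atTop atTop) (hk : Tendsto k atTop atTop)
    (hkp : Tendsto (fun t => (k t : ℝ) / (p t : ℝ)) atTop (nhds 0)) :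
    ∀ ε > (0 : ℝ), ∀ᶠ t : ℕ in atTop,
      mutualInfoUnif (fun T : {T : Finset (Fin (p t)) // T ∈ stildeF (p t) (k t)} =>
          unlabeledLaw (muVec (p t) (k t) lam T.1))
        ≤ (1 / 2) * (lam ^ 2 / (k t : ℝ)) * (1 + ε) := by
  intro ε hε
  have h0 := hlam.1
  have hkr : Tendsto (fun t => (k t : ℝ)) atTop atTop := tendsto_natCast_atTop_atTop.comp hk
  have hl : Tendsto (fun t => lam / (k t : ℝ)) atTop (nhds 0) := hkr.const_div_atTop lam
  have hs : Tendsto (fun t => √(lam / (k t : ℝ))) atTop (nhds 0) := by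
    have := (Real.continuous_sqrt.tendsto 0).comp hl
    rw [Real.sqrt_zero] at this
    exact this
  have hlim : Tendsto (fun t => lam / (k t : ℝ) / 2 + 4 * Real.exp (3 / 2) * √(lam / (k t : ℝ)))
      atTop (nhds 0) := by
    have := (hl.div_const 2).add (hs.const_mul (4 * Real.exp (3 / 2)))
    rw [zero_div, mul_zero, add_zero] at this
    exact this
  have hpos : 0 < lam * ε / 2 := by positivity
  filter_upwards [hlim.eventually (gt_mem_nhds hpos), hk.eventually_ge_atTop 2] with t ht hk2
  refine (info_final lam hlam (p t) (k t) hk2).trans ?_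
  have hk0 : (0 : ℝ) < k t := by positivity
  have h1 := mul_le_mul_of_nonneg_left ht.le (by positivity : 0 ≤ lam / (k t : ℝ))
  have e : 1 / 2 * (lam ^ 2 / (k t : ℝ)) * (1 + ε) = lam ^ 2 / (2 * k t) + lam / k t * (lam * ε / 2) := by
    field_simp
  rw [e]
  linarith
end
end

section
/- Let {(x_i, y_i)}_{i=1}^L be L i.i.d. labeled samples from the symmetric sparse Gaussian mixture model with a k-sparse μ, k = ⌊c₁ p^α⌋, whose nonzero entries are ±√(λ/k), and suppose L = ⌈(2βk/λ)·log(p−k)⌉ for some β ∈ (0, 1−α). Let β̃ = β − ε̃ for a sufficiently small fixed ε̃ > 0 with β̃ > 0, and let S_L be the indices of the top p̃ = ⌈p^{1−β̃}⌉ magnitudes of the vector w_L = (1/L)·Σ_{i=1}^L y_i x_i. Then for every ε > 0, P(|S ∩ S_L|/k ≥ 1−ε) → 1 as p → ∞. -/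
open MeasureTheory ProbabilityTheory Filter
open scoped ENNReal NNReal

noncomputable section

/-- The law of a labeled sample `(x, y)`: `y` uniform on `{-1,1}`, `x | y ~ N(yμ, I_p)`. -/
def labeledLaw {p : ℕ} (m : Fin p → ℝ) : Measure ((Fin p → ℝ) × ℝ) :=
  (2 : ℝ≥0∞)⁻¹ • (gaussPi m).map (fun x => (x, (1 : ℝ)))
    + (2 : ℝ≥0∞)⁻¹ • (gaussPi (fun j => -m j)).map (fun x => (x, (-1 : ℝ)))

/-- The labeled-data vector `w_L = (1/L) ∑ᵢ yᵢ xᵢ`. -/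
def wL {p L : ℕ} (dl : Fin L → (Fin p → ℝ) × ℝ) : Fin p → ℝ :=
  fun j => (L : ℝ)⁻¹ * ∑ i, (dl i).2 * (dl i).1 j

/-- `T` is a set of `m` indices with the largest magnitudes of `w`. -/
def IsTopAbs {p : ℕ} (m : ℕ) (w : Fin p → ℝ) (T : Finset (Fin p)) : Prop :=
  T.card = m ∧ ∀ i ∈ T, ∀ j ∉ T, |w j| ≤ |w i|

instance labeledLaw_prob {p : ℕ} (m : Fin p → ℝ) : IsProbabilityMeasure (labeledLaw m) := by
  constructor
  unfold labeledLaw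
  rw [Measure.add_apply, Measure.smul_apply, Measure.smul_apply,
    Measure.map_apply (by fun_prop) MeasurableSet.univ,
    Measure.map_apply (by fun_prop) MeasurableSet.univ]
  simp [ENNReal.inv_two_add_inv_two]

lemma gaussPi_map {p : ℕ} (m : Fin p → ℝ) (j : Fin p) :
    (gaussPi m).map (fun x => x j) = gaussianReal (m j) 1 :=
  (measurePreserving_eval (fun j => gaussianReal (m j) 1) j).map_eq

lemma labeled_map {p : ℕ} (m : Fin p → ℝ) (j : Fin p) :
    (labeledLaw m).map (fun z => z.2 * z.1 j - m j) = gaussianReal 0 1 := by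
  unfold labeledLaw
  rw [Measure.map_add _ _ (by fun_prop), Measure.map_smul, Measure.map_smul,
    Measure.map_map (by fun_prop) (by fun_prop), Measure.map_map (by fun_prop) (by fun_prop)]
  have h1 : (gaussPi m).map ((fun z : (Fin p → ℝ) × ℝ => z.2 * z.1 j - m j) ∘
      fun x => (x, (1:ℝ))) = gaussianReal 0 1 := by
    have : ((fun z : (Fin p → ℝ) × ℝ => z.2 * z.1 j - m j) ∘ fun x => (x, (1:ℝ)))
        = (fun t : ℝ => t - m j) ∘ (fun x : Fin p → ℝ => x j) := by
      ext x; simp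
    rw [this, ← Measure.map_map (by fun_prop) (by fun_prop), gaussPi_map,
      gaussianReal_map_sub_const]
    simp
  have h2 : (gaussPi fun j => - m j).map ((fun z : (Fin p → ℝ) × ℝ => z.2 * z.1 j - m j) ∘
      fun x => (x, (-1:ℝ))) = gaussianReal 0 1 := by
    have : ((fun z : (Fin p → ℝ) × ℝ => z.2 * z.1 j - m j) ∘ fun x => (x, (-1:ℝ)))
        = (fun t : ℝ => -m j - t) ∘ (fun x : Fin p → ℝ => x j) := by
      ext x; simp; ring
    rw [this, ← Measure.map_map (by fun_prop) (by fun_prop), gaussPi_map,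
      gaussianReal_map_const_sub]
    simp
  rw [h1, h2, ← add_smul, ENNReal.inv_two_add_inv_two, one_smul]

lemma labeled_subG {p : ℕ} (m : Fin p → ℝ) (j : Fin p) :
    HasSubgaussianMGF (fun z : (Fin p → ℝ) × ℝ => z.2 * z.1 j - m j) 1 (labeledLaw m) := by
  constructor
  · intro t
    have h := integrable_exp_mul_gaussianReal (μ := 0) (v := 1) t
    rw [← labeled_map m j] at h
    exact h.comp_measurable (by fun_prop)
  · intro t
    rw [mgf_gaussianReal (labeled_map m j)]
    simp

lemma pi_subG {p L : ℕ} (m : Fin p → ℝ) (j : Fin p) (i : Fin L) :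
    HasSubgaussianMGF (fun d : Fin L → (Fin p → ℝ) × ℝ => (d i).2 * (d i).1 j - m j) 1
      (Measure.pi fun _ : Fin L => labeledLaw m) := by
  have hm := (measurePreserving_eval (fun _ : Fin L => labeledLaw m) i).map_eq
  have h := labeled_subG m j
  rw [← hm] at h
  have hY : AEMeasurable (Function.eval i : (Fin L → (Fin p → ℝ) × ℝ) → (Fin p → ℝ) × ℝ)
      (Measure.pi fun _ : Fin L => labeledLaw m) := (measurable_pi_apply i).aemeasurable
  exact HasSubgaussianMGF.of_map hY h

lemma tail_one {p L : ℕ} (hL : 0 < L) (m : Fin p → ℝ) (j : Fin p) (s : ℝ) (hs : 0 ≤ s) :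
    (Measure.pi fun _ : Fin L => labeledLaw m).real {d | s ≤ |wL d j - m j|}
      ≤ 2 * Real.exp (-(L * s ^ 2 / 2)) := by
  set P := Measure.pi fun _ : Fin L => labeledLaw m with hP
  have hL' : (0:ℝ) < L := by exact_mod_cast hL
  have hind : iIndepFun (fun (i : Fin L) (d : Fin L → (Fin p → ℝ) × ℝ) =>
      (d i).2 * (d i).1 j - m j) P :=
    iIndepFun_pi (X := fun _ (z : (Fin p → ℝ) × ℝ) => z.2 * z.1 j - m j) (fun _ => by fun_prop)
  have hsub := HasSubgaussianMGF.sum_of_iIndepFun hind (c := fun _ => 1) (s := Finset.univ)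
    (fun i _ => pi_subG m j i)
  have hLs : 0 ≤ L * s := by positivity
  have e1 := hsub.measure_ge_le hLs
  have e2 := hsub.neg.measure_ge_le hLs
  have key : ∀ d : Fin L → (Fin p → ℝ) × ℝ, ∑ i, ((d i).2 * (d i).1 j - m j)
      = L * (wL d j - m j) := by
    intro d
    simp only [wL, Finset.sum_sub_distrib, Finset.sum_const, Finset.card_univ, Fintype.card_fin,
      nsmul_eq_mul]
    field_simp
  have hexp : -(L * s) ^ 2 / (2 * ((∑ i : Fin L, (1:ℝ≥0) : ℝ≥0) : ℝ)) = -(L * s ^ 2 / 2) := by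
    simp
    field_simp
  rw [hexp] at e1 e2
  have hsubset : {d : Fin L → (Fin p → ℝ) × ℝ | s ≤ |wL d j - m j|} ⊆
      {d | L * s ≤ ∑ i, ((d i).2 * (d i).1 j - m j)} ∪
      {d | L * s ≤ (-fun d : Fin L → (Fin p → ℝ) × ℝ => ∑ i, ((d i).2 * (d i).1 j - m j)) d} := by
    intro d hd
    simp only [Set.mem_ofPred_eq, Set.mem_union, Pi.neg_apply, key] at *
    rcases le_abs.1 hd with h | h
    · left; exact mul_le_mul_of_nonneg_left h hL'.le
    · right; nlinarith
  have h3 := (measureReal_mono (μ := P) hsubset).trans (measureReal_union_le _ _)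
  linarith

lemma markov_count {Ω ι : Type*} [MeasurableSpace Ω] (P : Measure Ω) [IsProbabilityMeasure P]
    (A : Finset ι) (E : ι → Ω → Prop) [∀ ω, DecidablePred fun i => E i ω]
    (hE : ∀ i, MeasurableSet {ω | E i ω})
    (q a : ℝ) (ha : 0 < a) (hq : ∀ i ∈ A, P.real {ω | E i ω} ≤ q) :
    P.real {ω | a ≤ ((A.filter fun i => E i ω).card : ℝ)} ≤ A.card * q / a := by
  have hcard : ∀ ω, ((A.filter fun i => E i ω).card : ℝ)
      = ∑ i ∈ A, Set.indicator {ω | E i ω} (fun _ => (1:ℝ)) ω := by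
    intro ω
    rw [Finset.card_filter]
    push_cast
    refine Finset.sum_congr rfl fun i _ => ?_
    simp [Set.indicator_apply]
  have hint : ∀ i ∈ A, Integrable (Set.indicator {ω | E i ω} (fun _ => (1:ℝ))) P :=
    fun i _ => (integrable_const 1).indicator (hE i)
  have h := mul_meas_ge_le_integral_of_nonneg (μ := P)
    (f := fun ω => ∑ i ∈ A, Set.indicator {ω | E i ω} (fun _ => (1:ℝ)) ω)
    (ae_of_all _ fun ω => Finset.sum_nonneg fun i _ => Set.indicator_nonneg (by simp) _)
    (integrable_finsetSum _ hint) a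
  rw [integral_finsetSum _ hint] at h
  simp_rw [hcard]
  rw [le_div_iff₀ ha, mul_comm]
  refine h.trans ?_
  calc _ ≤ ∑ i ∈ A, q := Finset.sum_le_sum fun i hi => by
        rw [integral_indicator_const _ (hE i)]; simpa using hq i hi
    _ = _ := by simp

lemma wL_meas {p L : ℕ} (j : Fin p) :
    Measurable fun d : Fin L → (Fin p → ℝ) × ℝ => wL d j := by
  unfold wL; fun_prop

lemma finite_bound {p L k : ℕ} (hL : 0 < L) (hk : 0 < k) (r τ ε : ℝ) (hτ : 0 ≤ τ) (hτr : τ ≤ r)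
    (hε : 0 < ε) (n : ℕ) (hn : 2 * k ≤ n)
    (S : Finset (Fin p)) (m : Fin p → ℝ) (hS : S.card = k)
    (h0 : ∀ j, j ∉ S → m j = 0) (h1 : ∀ j ∈ S, m j = r ∨ m j = -r)
    (SL : (Fin L → (Fin p → ℝ) × ℝ) → Finset (Fin p))
    (hSL : ∀ d, IsTopAbs n (wL d) (SL d)) :
    1 - (4 * p * Real.exp (-(L * τ ^ 2 / 2)) / n + 2 * Real.exp (-(L * (r - τ) ^ 2 / 2)) / ε) ≤
    ((Measure.pi fun _ : Fin L => labeledLaw m)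
        {d | 1 - ε ≤ ((S ∩ SL d).card : ℝ) / (k : ℝ)}).toReal := by
  classical
  set P := Measure.pi fun _ : Fin L => labeledLaw m with hP
  have hkR : (0:ℝ) < k := by exact_mod_cast hk
  have hnR : (0:ℝ) < n := by
    have : 0 < n := by omega
    exact_mod_cast this
  have hnk : 2 * (k:ℝ) ≤ n := by exact_mod_cast hn
  have hmeas : ∀ (s : ℝ) (j : Fin p),
      MeasurableSet {d : Fin L → (Fin p → ℝ) × ℝ | s ≤ |wL d j - m j|} := fun s j =>
    measurableSet_le measurable_const ((wL_meas j).sub_const _).abs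
  have b1 := markov_count P Sᶜ (fun j d => τ ≤ |wL d j - m j|) (hmeas τ)
    (2 * Real.exp (-(L * τ ^ 2 / 2))) (n / 2) (by positivity) (fun j _ => tail_one hL m j τ hτ)
  have b2 := markov_count P S (fun j d => r - τ ≤ |wL d j - m j|) (hmeas _)
    (2 * Real.exp (-(L * (r - τ) ^ 2 / 2))) (ε * k) (by positivity)
    (fun j _ => tail_one hL m j _ (by linarith))
  set B1 := {d : Fin L → (Fin p → ℝ) × ℝ |
    (n:ℝ) / 2 ≤ ((Sᶜ.filter fun j => τ ≤ |wL d j - m j|).card : ℝ)}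
  set B2 := {d : Fin L → (Fin p → ℝ) × ℝ |
    ε * k ≤ ((S.filter fun j => r - τ ≤ |wL d j - m j|).card : ℝ)}
  set G := {d | 1 - ε ≤ ((S ∩ SL d).card : ℝ) / (k : ℝ)}
  have hcov : Set.univ ⊆ G ∪ (B1 ∪ B2) := by
    intro d _
    by_cases hb1 : d ∈ B1
    · right; left; exact hb1
    by_cases hb2 : d ∈ B2
    · right; right; exact hb2
    left
    simp only [B1, B2, Set.mem_ofPred_eq, not_le] at hb1 hb2
    obtain ⟨hc, ht⟩ := hSL d
    have hsub : S \ (S.filter fun j => r - τ ≤ |wL d j - m j|) ⊆ S ∩ SL d := by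
      intro i hi
      simp only [Finset.mem_sdiff, Finset.mem_filter, not_and, not_le] at hi
      obtain ⟨hiS, hi2⟩ := hi
      have hi3 := hi2 hiS
      have hwi : τ ≤ |wL d i| := by
        have := abs_sub_abs_le_abs_sub (m i) (wL d i)
        rw [abs_sub_comm] at this
        have hr : |m i| = r := by
          rcases h1 i hiS with h | h <;> rw [h]
          · exact abs_of_nonneg (by linarith)
          · rw [abs_neg]; exact abs_of_nonneg (by linarith)
        linarith
      by_contra hcon
      have hni : i ∉ SL d := fun h => hcon (Finset.mem_inter.2 ⟨hiS, h⟩)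
      have hss : SL d ⊆ S ∪ (Sᶜ.filter fun j => τ ≤ |wL d j - m j|) := by
        intro j hj
        by_cases hjS : j ∈ S
        · exact Finset.mem_union_left _ hjS
        · refine Finset.mem_union_right _ ?_
          simp only [Finset.mem_filter, Finset.mem_compl]
          refine ⟨hjS, ?_⟩
          rw [h0 j hjS, sub_zero]
          exact hwi.trans (ht j hj i hni)
      have hle := (Finset.card_le_card hss).trans (Finset.card_union_le _ _)
      rw [hc, hS] at hle
      have hle' : (n:ℝ) ≤ k + ((Sᶜ.filter fun j => τ ≤ |wL d j - m j|).card : ℝ) := by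
        exact_mod_cast hle
      linarith
    have hcard := Finset.card_le_card hsub
    have h5 := Finset.le_card_sdiff (S.filter fun j => r - τ ≤ |wL d j - m j|) S
    have h6 : k ≤ (S ∩ SL d).card + (S.filter fun j => r - τ ≤ |wL d j - m j|).card := by omega
    have h6' : (k:ℝ) ≤ (S ∩ SL d).card +
      ((S.filter fun j => r - τ ≤ |wL d j - m j|).card : ℝ) := by exact_mod_cast h6
    change 1 - ε ≤ _
    rw [le_div_iff₀ hkR]
    linarith
  have ht : 1 ≤ P.real G + (P.real B1 + P.real B2) := by
    have := (measureReal_mono (μ := P) hcov).trans (measureReal_union_le _ _)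
    rw [probReal_univ] at this
    linarith [measureReal_union_le (μ := P) B1 B2]
  change _ ≤ P.real G
  have hcp : ((Sᶜ.card : ℕ) : ℝ) ≤ p := by
    have := Finset.card_le_univ Sᶜ
    rw [Fintype.card_fin] at this
    exact_mod_cast this
  have b1' : P.real B1 ≤ 4 * p * Real.exp (-(L * τ ^ 2 / 2)) / n := by
    refine b1.trans ?_
    have : (4 * p * Real.exp (-(L * τ ^ 2 / 2)) / n : ℝ)
      = p * (2 * Real.exp (-(L * τ ^ 2 / 2))) / (n / 2) := by field_simp; ring
    rw [this]
    gcongr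
  have b2' : P.real B2 ≤ 2 * Real.exp (-(L * (r - τ) ^ 2 / 2)) / ε := by
    refine b2.trans (le_of_eq ?_)
    rw [hS]; field_simp
  linarith

lemma ev_pow (a b C : ℝ) (hab : a < b) : ∀ᶠ p : ℕ in atTop, C * (p:ℝ) ^ a ≤ (p:ℝ) ^ b := by
  have h := ((tendsto_rpow_atTop (sub_pos.2 hab)).comp
    tendsto_natCast_atTop_atTop).eventually_ge_atTop C
  filter_upwards [h, eventually_gt_atTop 0] with p hp hp0
  have hp0' : (0:ℝ) < p := by exact_mod_cast hp0
  have : (p:ℝ) ^ b = (p:ℝ) ^ (b - a) * (p:ℝ) ^ a := by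
    rw [← Real.rpow_add hp0']; ring_nf
  rw [this]
  exact mul_le_mul_of_nonneg_right hp (Real.rpow_nonneg hp0'.le _)

lemma exp_bound (β lam u P k L : ℝ) (hβ : 0 < β) (hlam : 0 < lam) (hk : 0 < k) (hP : 0 < P)
    (hkP : k ≤ P / 2) (hL : 2 * β * k * Real.log (P - k) / lam ≤ L) :
    Real.exp (-(L * (u * Real.sqrt (lam / k)) ^ 2 / 2)) ≤ (P / 2) ^ (-(β * u ^ 2)) := by
  rw [Real.rpow_def_of_pos (by positivity), mul_pow, Real.sq_sqrt (by positivity)]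
  apply Real.exp_le_exp.2
  have h1 : Real.log (P / 2) ≤ Real.log (P - k) := Real.log_le_log (by positivity) (by linarith)
  have h2 : β * u ^ 2 * Real.log (P / 2) ≤ β * u ^ 2 * Real.log (P - k) := by gcongr
  have h3 : 2 * β * k * Real.log (P - k) / lam * (u ^ 2 * (lam / k)) / 2 ≤
      L * (u ^ 2 * (lam / k)) / 2 := by gcongr
  have h4 : 2 * β * k * Real.log (P - k) / lam * (u ^ 2 * (lam / k)) / 2
      = β * u ^ 2 * Real.log (P - k) := by field_simp
  linarith

/-- Lemma 8: screening with the labeled data. With `k = ⌊c₁ p^α⌋`,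
`L = ⌈(2βk/λ) log(p-k)⌉`, `β ∈ (0, 1-α)` and `β̃ = β - ε̃ > 0`, the set `S_L` of the top
`⌈p^(1-β̃)⌉` magnitudes of `w_L` contains a `(1-ε)`-fraction of the support with probability
tending to one as `p → ∞`. -/
theorem stmt10 (α β lam c1 εt : ℝ)
    (hα : 0 < α) (hα2 : α < 1) (hβ : 0 < β) (hβ2 : β < 1 - α)
    (hεt : 0 < εt) (hβt : 0 < β - εt)
    (hlam : 0 < lam) (hc1 : 0 < c1)
    (k L : ℕ → ℕ)
    (hk : ∀ p : ℕ, k p = ⌊c1 * (p : ℝ) ^ α⌋₊)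
    (hL : ∀ p : ℕ, L p = ⌈2 * β * (k p : ℝ) * Real.log ((p : ℝ) - (k p : ℝ)) / lam⌉₊)
    (S : ∀ p : ℕ, Finset (Fin p)) (μ : ∀ p : ℕ, Fin p → ℝ)
    (hS : ∀ p, (S p).card = k p)
    (hμ0 : ∀ p, ∀ j, j ∉ S p → μ p j = 0)
    (hμ1 : ∀ p, ∀ j ∈ S p,
      μ p j = Real.sqrt (lam / (k p : ℝ)) ∨ μ p j = -Real.sqrt (lam / (k p : ℝ)))
    (SL : ∀ p : ℕ, (Fin (L p) → (Fin p → ℝ) × ℝ) → Finset (Fin p))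
    (hSL : ∀ (p : ℕ) d, IsTopAbs ⌈(p : ℝ) ^ (1 - (β - εt))⌉₊ (wL d) (SL p d)) :
    ∀ ε > (0 : ℝ), Tendsto (fun p : ℕ =>
      ((Measure.pi fun _ : Fin (L p) => labeledLaw (μ p))
        {d | 1 - ε ≤ ((S p ∩ SL p d).card : ℝ) / (k p : ℝ)}).toReal)
      atTop (nhds 1) := by
  intro ε hε
  set g : ℝ := (β - εt / 2) / β with hg
  have hg0 : 0 < g := div_pos (by linarith) hβ
  have hg1 : g < 1 := by rw [hg, div_lt_one hβ]; linarith
  set s := Real.sqrt g with hs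
  have hs0 : 0 < s := Real.sqrt_pos.2 hg0
  have hs1 : s < 1 := by rw [hs, Real.sqrt_lt' one_pos]; simpa using hg1
  have hs2 : β * s ^ 2 = β - εt / 2 := by rw [hs, Real.sq_sqrt hg0.le, hg]; field_simp
  have hc2 : 0 < β * (1 - s) ^ 2 := by
    have : 0 < 1 - s := by linarith
    positivity
  have hneg : ∀ c : ℝ, 0 < c → Tendsto (fun p : ℕ => (p:ℝ) ^ (-c)) atTop (nhds 0) := fun c hc =>
    (tendsto_rpow_neg_atTop hc).comp tendsto_natCast_atTop_atTop
  have hlim : Tendsto (fun p : ℕ => 1 - (4 * 2 ^ (β - εt / 2) * (p:ℝ) ^ (-(εt / 2))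
      + 2 * 2 ^ (β * (1 - s) ^ 2) / ε * (p:ℝ) ^ (-(β * (1 - s) ^ 2)))) atTop (nhds 1) := by
    have := (((hneg _ (half_pos hεt)).const_mul (4 * 2 ^ (β - εt / 2))).add
      ((hneg _ hc2).const_mul (2 * 2 ^ (β * (1 - s) ^ 2) / ε))).const_sub 1
    simpa using this
  refine tendsto_of_tendsto_of_tendsto_of_le_of_le' hlim tendsto_const_nhds ?_ ?_
  swap
  · exact Eventually.of_forall fun p => measureReal_le_one
  filter_upwards [ev_pow 0 α c1⁻¹ hα, ev_pow α 1 (2 * c1) hα2,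
    ev_pow α (1 - (β - εt)) (2 * c1) (by linarith), eventually_gt_atTop 2] with p h1 h2 h3 hp
  have hp2 : (2:ℝ) < p := by exact_mod_cast hp
  have hp0 : (0:ℝ) < p := by linarith
  have hkle : (k p : ℝ) ≤ c1 * (p:ℝ) ^ α := by
    rw [hk]; exact Nat.floor_le (by positivity)
  have hkpos : 0 < k p := by
    rw [hk, Nat.floor_pos]
    rw [Real.rpow_zero, mul_one] at h1
    calc (1:ℝ) = c1 * c1⁻¹ := by field_simp
      _ ≤ _ := by gcongr
  have hkR : (0:ℝ) < k p := by exact_mod_cast hkpos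
  rw [Real.rpow_one] at h2
  have hkP : (k p : ℝ) ≤ p / 2 := by linarith
  have hLge : 2 * β * (k p : ℝ) * Real.log ((p : ℝ) - (k p : ℝ)) / lam ≤ L p := by
    conv_rhs => rw [hL]
    exact Nat.le_ceil _
  have hLpos : 0 < L p := by
    rw [hL, Nat.ceil_pos]
    have : 0 < Real.log ((p : ℝ) - (k p : ℝ)) := Real.log_pos (by linarith)
    positivity
  have hn : 2 * k p ≤ ⌈(p : ℝ) ^ (1 - (β - εt))⌉₊ := by
    have : ((2 * k p : ℕ) : ℝ) ≤ (⌈(p : ℝ) ^ (1 - (β - εt))⌉₊ : ℝ) := by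
      push_cast
      linarith [Nat.le_ceil ((p : ℝ) ^ (1 - (β - εt)))]
    exact_mod_cast this
  have hr : 0 ≤ Real.sqrt (lam / (k p : ℝ)) := Real.sqrt_nonneg _
  have hfin := finite_bound hLpos hkpos (Real.sqrt (lam / (k p : ℝ)))
    (s * Real.sqrt (lam / (k p : ℝ))) ε (by positivity) (by nlinarith) hε _ hn (S p) (μ p) (hS p)
    (hμ0 p) (hμ1 p) (SL p) (hSL p)
  refine le_trans ?_ hfin
  have e1 := exp_bound β lam s p (k p) (L p) hβ hlam hkR hp0 hkP hLge
  have e2 := exp_bound β lam (1 - s) p (k p) (L p) hβ hlam hkR hp0 hkP hLge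
  rw [show (1 - s) * Real.sqrt (lam / (k p : ℝ))
    = Real.sqrt (lam / (k p : ℝ)) - s * Real.sqrt (lam / (k p : ℝ)) by ring] at e2
  rw [hs2] at e1
  have hdiv : ∀ c : ℝ, ((p:ℝ) / 2) ^ (-c) = 2 ^ c * (p:ℝ) ^ (-c) := by
    intro c
    rw [Real.div_rpow hp0.le (by norm_num), Real.rpow_neg (by norm_num : (0:ℝ) ≤ 2)]
    field_simp
  rw [hdiv] at e1 e2
  have f1 : 4 * (p:ℝ) * Real.exp (-(L p * (s * Real.sqrt (lam / (k p : ℝ))) ^ 2 / 2))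
      / (⌈(p : ℝ) ^ (1 - (β - εt))⌉₊ : ℝ) ≤ 4 * 2 ^ (β - εt / 2) * (p:ℝ) ^ (-(εt / 2)) := by
    have hpp : 0 < (p:ℝ) ^ (1 - (β - εt)) := Real.rpow_pos_of_pos hp0 _
    calc _ ≤ 4 * (p:ℝ) * (2 ^ (β - εt / 2) * (p:ℝ) ^ (-(β - εt / 2))) /
          (p : ℝ) ^ (1 - (β - εt)) := by
          gcongr
          exact Nat.le_ceil _
      _ = _ := by
          rw [div_eq_iff hpp.ne']
          have : (p:ℝ) * (p:ℝ) ^ (-(β - εt / 2)) =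
              (p:ℝ) ^ (-(εt / 2)) * (p : ℝ) ^ (1 - (β - εt)) := by
            nth_rewrite 1 [← Real.rpow_one (p:ℝ)]
            rw [← Real.rpow_add hp0, ← Real.rpow_add hp0]; ring_nf
          linear_combination 4 * 2 ^ (β - εt / 2) * this
  have f2 : 2 * Real.exp (-(L p * (Real.sqrt (lam / (k p : ℝ)) -
      s * Real.sqrt (lam / (k p : ℝ))) ^ 2 / 2)) / ε ≤
      2 * 2 ^ (β * (1 - s) ^ 2) / ε * (p:ℝ) ^ (-(β * (1 - s) ^ 2)) := by
    calc _ ≤ 2 * (2 ^ (β * (1 - s) ^ 2) * (p:ℝ) ^ (-(β * (1 - s) ^ 2))) / ε := by gcongr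
      _ = _ := by ring
  linarith
end
end

section
/- Let λ > 0, let k ≥ 1 be an integer, and let w ~ N(0, (k−1)/k). Then E[tanh(λ + √λ·w)] ≤ λ. -/
open MeasureTheory ProbabilityTheory
open scoped ENNReal NNReal

lemma sinh_le_mul_cosh_aux {a : ℝ} (ha : 0 ≤ a) : Real.sinh a ≤ a * Real.cosh a := by
  have hd : ∀ x : ℝ, HasDerivAt (fun x => x * Real.cosh x - Real.sinh x) (x * Real.sinh x) x := by
    intro x
    have h := ((hasDerivAt_id x).mul (Real.hasDerivAt_cosh x)).sub (Real.hasDerivAt_sinh x)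
    refine h.congr_deriv ?_
    simp
  have hm : MonotoneOn (fun x => x * Real.cosh x - Real.sinh x) (Set.Ici (0 : ℝ)) := by
    apply monotoneOn_of_deriv_nonneg (convex_Ici 0)
    · exact fun x _ => (hd x).continuousAt.continuousWithinAt
    · exact fun x _ => (hd x).differentiableAt.differentiableWithinAt
    · intro x hx
      rw [interior_Ici] at hx
      rw [(hd x).deriv]
      exact mul_nonneg (le_of_lt hx) (Real.sinh_nonneg_iff.2 (le_of_lt hx))
  have := hm (Set.mem_Ici.2 le_rfl) (Set.mem_Ici.2 ha) ha
  simp at this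
  linarith

lemma tanh_pair_aux {a : ℝ} (ha : 0 ≤ a) (b : ℝ) :
    Real.tanh (a + b) + Real.tanh (a + -b) ≤ 2 * a := by
  have h1 := sinh_le_mul_cosh_aux ha
  have hC := Real.cosh_pos a
  have hp := Real.cosh_pos (a + b)
  have hq := Real.cosh_pos (a + -b)
  have hS : 0 ≤ Real.sinh a := Real.sinh_nonneg_iff.2 ha
  have e1 := Real.cosh_sq a
  have e2 := Real.cosh_sq b
  have hprod : Real.cosh (a + b) * Real.cosh (a + -b) = Real.cosh a ^ 2 + Real.sinh b ^ 2 := by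
    rw [Real.cosh_add, Real.cosh_add, Real.cosh_neg, Real.sinh_neg]
    linear_combination Real.cosh a ^ 2 * e2 + Real.sinh b ^ 2 * e1
  have hnum : Real.sinh (a + b) * Real.cosh (a + -b) + Real.cosh (a + b) * Real.sinh (a + -b)
      = 2 * Real.sinh a * Real.cosh a := by
    rw [← Real.sinh_add, ← Real.sinh_two_mul]
    congr 1
    ring
  rw [Real.tanh_eq_sinh_div_cosh, Real.tanh_eq_sinh_div_cosh, div_add_div _ _ hp.ne' hq.ne',
    div_le_iff₀ (by positivity), hnum, hprod]
  nlinarith [mul_le_mul_of_nonneg_right h1 hC.le, mul_nonneg ha (sq_nonneg (Real.sinh b))]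

lemma abs_tanh_aux (x : ℝ) : ‖Real.tanh x‖ ≤ 1 := by
  have hC := Real.cosh_pos x
  rw [Real.norm_eq_abs, Real.tanh_eq_sinh_div_cosh, abs_div, abs_of_pos hC, div_le_one hC]
  refine abs_le_of_sq_le_sq ?_ hC.le
  have := Real.cosh_sq x
  linarith

lemma continuous_tanh_aux : Continuous Real.tanh := by
  have : Real.tanh = fun x => Real.sinh x / Real.cosh x :=
    funext Real.tanh_eq_sinh_div_cosh
  rw [this]
  exact Real.continuous_sinh.div Real.continuous_cosh fun x => (Real.cosh_pos x).ne'

/-- for `λ > 0`, an integer `k ≥ 1` and `w ~ N(0, (k-1)/k)`,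
`E[tanh(λ + √λ w)] ≤ λ`. -/
theorem stmt16 (lam : ℝ) (hlam : 0 < lam) (k : ℕ) (hk : 1 ≤ k) :
    (∫ w, Real.tanh (lam + Real.sqrt lam * w)
      ∂(gaussianReal 0 (((k - 1 : ℕ) : ℝ≥0) / (k : ℝ≥0)))) ≤ lam := by
  generalize (((k - 1 : ℕ) : ℝ≥0) / (k : ℝ≥0)) = v
  have hc : ∀ s : ℝ, Continuous fun w => Real.tanh (lam + s * w) := fun s =>
    continuous_tanh_aux.comp (by fun_prop)
  have hi : ∀ s : ℝ, Integrable (fun w => Real.tanh (lam + s * w)) (gaussianReal 0 v) := fun s =>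
    Integrable.of_bound (hc s).aestronglyMeasurable 1 (ae_of_all _ fun w => abs_tanh_aux _)
  have hsym : ∫ w, Real.tanh (lam + Real.sqrt lam * w) ∂(gaussianReal 0 v)
      = ∫ w, Real.tanh (lam + (-Real.sqrt lam) * w) ∂(gaussianReal 0 v) := by
    have h := gaussianReal_map_neg (μ := 0) (v := v)
    rw [neg_zero] at h
    conv_lhs => rw [← h]
    rw [integral_map (by fun_prop) (hc _).aestronglyMeasurable]
    simp
  have hsum : ∫ w, (Real.tanh (lam + Real.sqrt lam * w) + Real.tanh (lam + (-Real.sqrt lam) * w))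
      ∂(gaussianReal 0 v) ≤ ∫ _w, 2 * lam ∂(gaussianReal 0 v) := by
    apply integral_mono ((hi _).add (hi _)) (integrable_const _)
    intro w
    have := tanh_pair_aux hlam.le (Real.sqrt lam * w)
    simpa using this
  rw [integral_add (hi _) (hi _), ← hsym] at hsum
  simp at hsum
  linarith
end

section
/- Let x̃₁,…,x̃_L be i.i.d. samples of the form x̃_i = θ^S + σξ_i, where ξ_i ~ N(0, I_p), σ = 1/√λ, S is uniformly distributed over the collection 𝕊̃ of k-element subsets of [p] containing {1,…,k−1}, and θ^S(j) = (1/√k)·1{j ∈ S}. Then the mutual information between the samples and S satisfies I(X^L; S) ≤ Lλ/(2k), where X^L = (x̃₁,…,x̃_L). -/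
open MeasureTheory ProbabilityTheory
open scoped ENNReal NNReal

noncomputable section

/-- The law of `L` i.i.d. samples `x̃ᵢ = θ^T + σ ξᵢ` with `σ = 1/√λ`, i.e. each sample is
`N(θ^T, (1/λ) I_p)`, given the support `T`. -/
def labeledTildeLaw (p k L : ℕ) (lam : ℝ) (T : Finset (Fin p)) :
    Measure (Fin L → Fin p → ℝ) :=
  Measure.pi fun _ : Fin L =>
    Measure.pi fun j : Fin p => gaussianReal (thetaVec p k T j) (Real.toNNReal lam⁻¹)

theorem dens_integrable_iff {α : Type*} [MeasurableSpace α] {μ ν : Measure α} {g : α → ℝ}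
    (hg : Measurable g) (h : ν = μ.withDensity (fun x => ENNReal.ofReal (Real.exp (g x))))
    (f : α → ℝ) : Integrable f ν ↔ Integrable (fun x => Real.exp (g x) * f x) μ := by
  rw [h, integrable_withDensity_iff_integrable_smul' (by fun_prop) (by simp)]
  simp [ENNReal.toReal_ofReal (Real.exp_pos _).le]

theorem dens_integral {α : Type*} [MeasurableSpace α] {μ ν : Measure α} {g : α → ℝ}
    (hg : Measurable g) (h : ν = μ.withDensity (fun x => ENNReal.ofReal (Real.exp (g x))))
    (f : α → ℝ) : ∫ x, f x ∂ν = ∫ x, Real.exp (g x) * f x ∂μ := by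
  rw [h, integral_withDensity_eq_integral_toReal_smul (by fun_prop) (by simp)]
  simp [ENNReal.toReal_ofReal (Real.exp_pos _).le]

/-- `ν` has log-density `g` with respect to `μ`, with relative entropy `c`. -/
structure Dens {α : Type*} [MeasurableSpace α] (μ ν : Measure α) (g : α → ℝ) (c : ℝ) : Prop where
  p1 : IsProbabilityMeasure μ
  p2 : IsProbabilityMeasure ν
  meas : Measurable g
  eq : ν = μ.withDensity (fun x => ENNReal.ofReal (Real.exp (g x)))
  int : Integrable g ν
  val : ∫ x, g x ∂ν = c

theorem Dens.expint {α : Type*} [MeasurableSpace α] {μ ν : Measure α} {g : α → ℝ} {c : ℝ}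
    (h : Dens μ ν g c) : Integrable (fun x => Real.exp (g x)) μ := by
  have := h.p2
  have := (dens_integrable_iff h.meas h.eq (fun _ => 1)).1 (integrable_const 1)
  simpa using this

theorem Dens.pi {ι : Type*} [Fintype ι] {α : ι → Type*} [∀ i, MeasurableSpace (α i)]
    {μ ν : ∀ i, Measure (α i)} {g : ∀ i, α i → ℝ} {c : ι → ℝ}
    (h : ∀ i, Dens (μ i) (ν i) (g i) (c i)) :
    Dens (Measure.pi μ) (Measure.pi ν) (fun x => ∑ i, g i (x i)) (∑ i, c i) := by
  have := fun i => (h i).p1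
  have := fun i => (h i).p2
  have hm := fun i => (h i).meas
  have hi : ∀ i, Integrable (fun x : ∀ i, α i => g i (x i)) (Measure.pi ν) := fun i =>
    (measurePreserving_eval ν i).integrable_comp_of_integrable (h i).int
  refine ⟨inferInstance, inferInstance, by fun_prop, ?_, integrable_finsetSum _ fun i _ => hi i, ?_⟩
  · refine Measure.pi_eq fun s hs => ?_
    rw [withDensity_apply _ (MeasurableSet.univ_pi hs), Measure.restrict_pi_pi]
    have h1 : ∀ i, Integrable (fun x => Real.exp (g i x)) ((μ i).restrict (s i)) :=
      fun i => (h i).expint.restrict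
    simp_rw [Real.exp_sum]
    rw [← ofReal_integral_eq_lintegral_ofReal (Integrable.fintype_prod_dep h1)
      (Filter.Eventually.of_forall fun x => Finset.prod_nonneg fun i _ => (Real.exp_pos _).le),
      integral_fintype_prod_eq_prod (fun i x => Real.exp (g i x)),
      ENNReal.ofReal_prod_of_nonneg (fun i _ => integral_nonneg fun x => (Real.exp_pos _).le)]
    refine Finset.prod_congr rfl fun i _ => ?_
    rw [ofReal_integral_eq_lintegral_ofReal (h1 i)
      (Filter.Eventually.of_forall fun x => (Real.exp_pos _).le), (h i).eq,
      withDensity_apply _ (hs i)]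
  · rw [integral_finsetSum _ fun i _ => hi i]
    refine Finset.sum_congr rfl fun i _ => ?_
    rw [← (h i).val, ← (measurePreserving_eval ν i).map_eq,
      integral_map (measurable_pi_apply i).aemeasurable (hm i).aestronglyMeasurable]

theorem dens_gauss (a b lam : ℝ) (hlam : 0 < lam) :
    Dens (gaussianReal a (Real.toNNReal lam⁻¹)) (gaussianReal b (Real.toNNReal lam⁻¹))
      (fun x => lam * ((b - a) * x - (b ^ 2 - a ^ 2) / 2)) (lam * (b - a) ^ 2 / 2) := by
  have hv : Real.toNNReal lam⁻¹ ≠ 0 := by simpa using hlam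
  have hid : Integrable (fun x : ℝ => x) (gaussianReal b (Real.toNNReal lam⁻¹)) := by
    exact
      (memLp_id_gaussianReal (μ := b) (v := Real.toNNReal lam⁻¹) 1).integrable (by simp)
  refine ⟨inferInstance, inferInstance, by fun_prop, ?_, ((hid.const_mul _).sub (integrable_const _)).const_mul _, ?_⟩
  · rw [gaussianReal_of_var_ne_zero _ hv, gaussianReal_of_var_ne_zero _ hv,
      ← withDensity_mul _ (measurable_gaussianPDF _ _) (by fun_prop)]
    congr 1
    ext x
    simp only [gaussianPDF, Pi.mul_apply]
    rw [← ENNReal.ofReal_mul (gaussianPDFReal_nonneg _ _ _)]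
    congr 1
    simp only [gaussianPDFReal]
    rw [mul_assoc (√_)⁻¹, ← Real.exp_add, Real.coe_toNNReal _ (by positivity)]
    congr 2
    field_simp
    ring
  · rw [integral_const_mul, integral_sub (hid.const_mul _) (integrable_const _), integral_const_mul,
      integral_id_gaussianReal]
    simp
    ring

theorem dens_mi {ι α : Type*} [Fintype ι] [Nonempty ι] [MeasurableSpace α] {Q : Measure α}
    {κ : ι → Measure α} {g : ι → α → ℝ} {c : ℝ} (h : ∀ i, Dens Q (κ i) (g i) c) :
    mutualInfoUnif κ ≤ c := by
  classical
  have hQ : IsProbabilityMeasure Q := (h (Classical.arbitrary ι)).p1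
  have := fun i => (h i).p2
  have hm := fun i => (h i).meas
  set N : ℝ := (Fintype.card ι : ℝ) with hN
  have hN0 : 0 < N := by simp [hN, Fintype.card_pos]
  set m : α → ℝ := fun x => N⁻¹ * ∑ t, Real.exp (g t x) with hmdef
  have hmm : Measurable m := by fun_prop
  have hm0 : ∀ x, 0 < m x := fun x => mul_pos (inv_pos.2 hN0)
    (Finset.sum_pos (fun t _ => Real.exp_pos _) Finset.univ_nonempty)
  have hmi : Integrable m Q := (integrable_finsetSum _ fun i _ => (h i).expint).const_mul _
  have hexp1 : ∀ s, ∫ x, Real.exp (g s x) ∂Q = 1 := fun s => by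
    have := dens_integral (h s).meas (h s).eq (fun _ => 1)
    simpa using this.symm
  have hm1 : ∫ x, m x ∂Q = 1 := by
    simp only [hmdef]
    rw [integral_const_mul, integral_finsetSum _ fun i _ => (h i).expint]
    simp [hexp1, ← hN, hN0.ne']
  set B := ((Fintype.card ι : ℝ≥0∞)⁻¹ • ∑ t : ι, κ t) with hB
  have hBeq : B = Q.withDensity (fun x => ENNReal.ofReal (m x)) := by
    ext A hA
    rw [withDensity_apply _ hA, ← ofReal_integral_eq_lintegral_ofReal hmi.restrict
      (Filter.Eventually.of_forall fun x => (hm0 x).le)]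
    simp only [hmdef]
    rw [integral_const_mul, integral_finsetSum _ fun i _ => (h i).expint.restrict,
      ENNReal.ofReal_mul (by positivity), ENNReal.ofReal_sum_of_nonneg
      (fun i _ => integral_nonneg fun x => (Real.exp_pos _).le)]
    simp only [hB, Measure.smul_apply, Measure.finsetSum_apply, smul_eq_mul]
    congr 1
    · rw [ENNReal.ofReal_inv_of_pos hN0, hN]; simp
    · refine Finset.sum_congr rfl fun i _ => ?_
      rw [ofReal_integral_eq_lintegral_ofReal (h i).expint.restrict
        (Filter.Eventually.of_forall fun x => (Real.exp_pos _).le)]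
      conv_lhs => rw [(h i).eq]
      rw [withDensity_apply _ hA]
  have hκB : ∀ s, κ s = B.withDensity (fun x => ENNReal.ofReal (Real.exp (g s x) / m x)) := by
    intro s
    rw [hBeq, ← withDensity_mul _ (by fun_prop) (by fun_prop), (h s).eq]
    congr 1
    ext x
    simp only [Pi.mul_apply]
    rw [← ENNReal.ofReal_mul (hm0 x).le, mul_div_cancel₀ _ (hm0 x).ne']
  have hBp : SigmaFinite B := by rw [hBeq]; exact SigmaFinite.withDensity_ofReal _
  have hkl : ∀ s, klDivR (κ s) B = ∫ x, (g s x - Real.log (m x)) ∂(κ s) := by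
    intro s
    have h1 : (κ s).rnDeriv B =ᵐ[B] fun x => ENNReal.ofReal (Real.exp (g s x) / m x) := by
      conv_lhs => rw [hκB s]
      exact Measure.rnDeriv_withDensity _ (by fun_prop)
    have hac : κ s ≪ B := by rw [hκB s]; exact withDensity_absolutelyContinuous _ _
    refine integral_congr_ae ?_
    filter_upwards [hac.ae_le h1] with x hx
    rw [hx, ENNReal.toReal_ofReal (div_pos (Real.exp_pos _) (hm0 x)).le,
      Real.log_div (Real.exp_pos _).ne' (hm0 x).ne', Real.log_exp]
  have hint : ∀ s, Integrable (fun x => g s x - Real.log (m x)) (κ s) := by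
    intro s
    rw [dens_integrable_iff (hm s) (h s).eq]
    refine (hmi.const_mul (N * |Real.log N| + 1)).mono' (by fun_prop)
      (Filter.Eventually.of_forall fun x => ?_)
    have hle : Real.exp (g s x) ≤ N * m x := by
      simp only [hmdef]
      rw [mul_inv_cancel_left₀ hN0.ne']
      exact Finset.single_le_sum (f := fun t => Real.exp (g t x))
        (fun t _ => (Real.exp_pos _).le) (Finset.mem_univ s)
    set r := Real.exp (g s x) / m x with hr
    have hr0 : 0 < r := div_pos (Real.exp_pos _) (hm0 x)
    have hrN : r ≤ N := by rw [hr, div_le_iff₀ (hm0 x)]; exact hle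
    have e1 : Real.exp (g s x) = r * m x := by rw [hr, div_mul_cancel₀ _ (hm0 x).ne']
    have e2 : g s x - Real.log (m x) = Real.log r := by
      rw [hr, Real.log_div (Real.exp_pos _).ne' (hm0 x).ne', Real.log_exp]
    rw [e2, e1, Real.norm_eq_abs, mul_right_comm, abs_mul, abs_of_pos (hm0 x)]
    refine mul_le_mul_of_nonneg_right ?_ (hm0 x).le
    have l1 : Real.log r ≤ |Real.log N| := (Real.log_le_log hr0 hrN).trans (le_abs_self _)
    have l2 : 1 - r⁻¹ ≤ Real.log r := Real.one_sub_inv_le_log_of_pos hr0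
    have l3 : r * (1 - r⁻¹) = r - 1 := by field_simp
    have l4 := mul_le_mul_of_nonneg_left l2 hr0.le
    have l5 := mul_le_mul_of_nonneg_left l1 hr0.le
    have l6 := mul_le_mul_of_nonneg_right hrN (abs_nonneg (Real.log N))
    have l7 := mul_nonneg hN0.le (abs_nonneg (Real.log N))
    rw [abs_le]; constructor <;> linarith
  have hlog : ∀ s, Integrable (fun x => Real.log (m x)) (κ s) := fun s => by
    have := (h s).int.sub (hint s)
    refine this.congr (Filter.Eventually.of_forall fun x => ?_)
    simp
  have hkl2 : ∀ s, klDivR (κ s) B = c - ∫ x, Real.exp (g s x) * Real.log (m x) ∂Q := fun s => by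
    rw [hkl s, integral_sub (h s).int (hlog s), (h s).val, dens_integral (hm s) (h s).eq]
  have hpos : 0 ≤ ∑ s, ∫ x, Real.exp (g s x) * Real.log (m x) ∂Q := by
    have hI : ∀ s, Integrable (fun x => Real.exp (g s x) * Real.log (m x)) Q := fun s =>
      (dens_integrable_iff (hm s) (h s).eq _).1 (hlog s)
    rw [← integral_finsetSum _ fun s _ => hI s]
    have h0 : ∫ x, N * (m x - 1) ∂Q = 0 := by
      rw [integral_const_mul, integral_sub hmi (integrable_const _), hm1]; simp
    rw [← h0]
    refine integral_mono ((hmi.sub (integrable_const _)).const_mul _)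
      (integrable_finsetSum _ fun s _ => hI s) fun x => ?_
    simp only
    rw [← Finset.sum_mul]
    have e : ∑ t, Real.exp (g t x) = N * m x := by
      simp only [hmdef]; rw [mul_inv_cancel_left₀ hN0.ne']
    rw [e, mul_assoc]
    refine mul_le_mul_of_nonneg_left ?_ hN0.le
    have l2 := mul_le_mul_of_nonneg_left (Real.one_sub_inv_le_log_of_pos (hm0 x)) (hm0 x).le
    have l3 : m x * (1 - (m x)⁻¹) = m x - 1 := by have := (hm0 x).ne'; field_simp
    linarith
  unfold mutualInfoUnif
  rw [← hN, ← hB]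
  simp_rw [hkl2]
  rw [Finset.sum_sub_distrib, Finset.sum_const, Finset.card_univ, nsmul_eq_mul, ← hN,
    inv_mul_le_iff₀ hN0]
  linarith

theorem stilde_sum (p k : ℕ) (hk : 1 ≤ k) (hkp : k ≤ p) (T : Finset (Fin p))
    (hT : T ∈ stildeF p k) (lam : ℝ) :
    ∑ j : Fin p, lam * (thetaVec p k T j - (if (j : ℕ) < k - 1 then (Real.sqrt k)⁻¹ else 0)) ^ 2 / 2
      = lam / (2 * k) := by
  simp only [stildeF, Finset.mem_filter, Finset.mem_powersetCard] at hT
  obtain ⟨⟨-, hc⟩, hT⟩ := hT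
  set U : Finset (Fin p) := Finset.univ.filter fun j => (j : ℕ) < k - 1 with hU
  have hUT : U ⊆ T := fun j hj => hT j (by simpa [hU] using hj)
  have hUc : U.card = k - 1 := by
    rw [hU, Fin.card_filter_val_lt]; omega
  have hd : (T \ U).card = 1 := by rw [Finset.card_sdiff_of_subset hUT]; omega
  have key : ∀ j : Fin p, lam * (thetaVec p k T j -
      (if (j : ℕ) < k - 1 then (Real.sqrt k)⁻¹ else 0)) ^ 2 / 2
      = if j ∈ T \ U then lam / (2 * k) else 0 := by
    intro j
    have hk0 : (0 : ℝ) < k := by exact_mod_cast hk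
    by_cases h1 : (j : ℕ) < k - 1
    · simp [thetaVec, hU, h1, hT j h1]
    · by_cases h2 : j ∈ T
      · simp [thetaVec, hU, h1, h2, inv_pow, Real.sq_sqrt hk0.le]
        field_simp
      · simp [thetaVec, h1, h2]
  rw [Finset.sum_congr rfl fun j _ => key j, Finset.sum_ite_mem, Finset.univ_inter,
    Finset.sum_const, hd, one_smul]

/-- the mutual information between the `L` samples
`x̃ᵢ = θ^S + σξᵢ` (`σ = 1/√λ`) and the support `S`, uniform over `𝕊̃`, satisfies
`I(X^L; S) ≤ Lλ/(2k)`. -/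
theorem stmt18 (p k L : ℕ) (lam : ℝ) (hlam : 0 < lam) (hk : 1 ≤ k) (hkp : k ≤ p) :
    mutualInfoUnif (fun T : {T : Finset (Fin p) // T ∈ stildeF p k} =>
        labeledTildeLaw p k L lam T.1)
      ≤ (L : ℝ) * lam / (2 * k) := by
  cases isEmpty_or_nonempty {T : Finset (Fin p) // T ∈ stildeF p k} with
  | inl h => simp [mutualInfoUnif]; positivity
  | inr h =>
    refine dens_mi (Q := Measure.pi fun _ : Fin L => Measure.pi fun j : Fin p =>
      gaussianReal (if (j : ℕ) < k - 1 then (Real.sqrt k)⁻¹ else 0) (Real.toNNReal lam⁻¹))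
      (g := fun T x => ∑ i : Fin L, ∑ j : Fin p,
        lam * ((thetaVec p k T.1 j - (if (j : ℕ) < k - 1 then (Real.sqrt k)⁻¹ else 0)) * x i j -
          (thetaVec p k T.1 j ^ 2 - (if (j : ℕ) < k - 1 then (Real.sqrt k)⁻¹ else 0) ^ 2) / 2)) fun T => ?_
    have := Dens.pi (fun _ : Fin L => Dens.pi (fun j : Fin p =>
      dens_gauss (if (j : ℕ) < k - 1 then (Real.sqrt k)⁻¹ else 0) (thetaVec p k T.1 j) lam hlam))
    rw [stilde_sum p k hk hkp T.1 T.2 lam] at this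
    simp only [Finset.sum_const, Finset.card_univ, Fintype.card_fin, nsmul_eq_mul,
      ← mul_div_assoc] at this
    simpa only [labeledTildeLaw, mul_div_assoc] using this
end
end
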